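/- arXiv:2504.03637 — 5 statements merged into one kernel-verified Lean document; each statement's English description precedes it below -/
import Mathlib

section
/- Let G = (V, E) be a finite simple graph with vertex set V = {1, …, n}, n ≥ 2. Call a configuration P = (P_1, …, P_n) a chart configuration if every P_i has its (3,4) entry equal to 1, and let U be the set of chart configurations such that every P_i has rank 3 and, for every edge {i,j} of G, the (3,3) entry of 𝓕(P_i,P_j) is nonzero. Define the affine fundamental-matrix map 𝓕_G^aff on U, with values in edge-indexed tuples of complex 3×3 matrices, by (𝓕_G^aff(P))_e = 𝓕(P_i,P_j) / [𝓕(P_i,P_j)]_{3,3} for e = {i,j} ∈ E; this map is differentiable on U, with derivative at P a linear map on tuples (H_1, …, H_n) of 3×4 matrices whose (3,4) entries vanish. Then G is finite solvable if and only if, for a generic configuration P in U, the derivative of 𝓕_G^aff at P has rank 11n − 15. -/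
open Matrix

attribute [local instance] Matrix.normedAddCommGroup Matrix.normedSpace

/-- The fundamental matrix of a camera pair `(P, Q)` of `3 × 4` matrices:
its `(h,k)` entry is `(-1)^(h+k)` times the determinant of the `4 × 4` matrix
obtained by stacking the rows of `P` other than row `k` (in their original order)
on top of the rows of `Q` other than row `h` (in their original order). -/
def fund {K : Type*} [CommRing K] (P Q : Matrix (Fin 3) (Fin 4) K) :
    Matrix (Fin 3) (Fin 3) K :=
  Matrix.of fun h k =>
    (-1 : K) ^ ((h : ℕ) + (k : ℕ)) *
      (Matrix.of fun r c : Fin 4 =>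
          if hr : (r : ℕ) < 2 then P (k.succAbove ⟨(r : ℕ), hr⟩) c
          else Q (h.succAbove ⟨(r : ℕ) - 2, by have := r.isLt; omega⟩) c).det

/-- A configuration on a graph with vertex set `{1, …, n}`: a tuple of `n`
complex `3 × 4` matrices. -/
abbrev Config (n : ℕ) := Fin n → Matrix (Fin 3) (Fin 4) ℂ

/-- Two configurations are projectively equivalent if they differ by a single
invertible `4 × 4` matrix `H` and individual nonzero scalars `λᵢ`. -/
def ProjEquiv {n : ℕ} (Q Q' : Config n) : Prop :=
  ∃ H : Matrix (Fin 4) (Fin 4) ℂ, IsUnit H ∧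
    ∃ lam : Fin n → ℂ, (∀ i, lam i ≠ 0) ∧ ∀ i, Q' i = lam i • (Q i * H)

/-- The set of configurations `Q` of rank-3 cameras whose fundamental matrices
along the edges of `G` agree, up to nonzero scale, with those of `P`. -/
def SolutionSet {n : ℕ} (G : SimpleGraph (Fin n)) (P : Config n) :
    Set (Config n) :=
  {Q | (∀ i, (Q i).rank = 3) ∧
    ∀ i j : Fin n, G.Adj i j →
      ∃ μ : ℂ, μ ≠ 0 ∧ fund (Q i) (Q j) = μ • fund (P i) (P j)}

/-- A graph `G` is finite solvable if, for a generic configuration `P` (i.e. away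
from the zero set of some nonzero polynomial in the `12n` entries), the set of
rank-3 configurations with the same fundamental matrices as `P` (up to scale on
each edge) is a finite union of projective-equivalence classes. -/
def FiniteSolvable {n : ℕ} (G : SimpleGraph (Fin n)) : Prop :=
  ∃ g : MvPolynomial (Fin n × Fin 3 × Fin 4) ℂ, g ≠ 0 ∧
    ∀ P : Config n, MvPolynomial.eval (fun v => P v.1 v.2.1 v.2.2) g ≠ 0 →
      ∃ T : Set (Config n), T.Finite ∧
        SolutionSet G P = {Q | ∃ Q' ∈ T, ProjEquiv Q Q'}

/-- The edges of a graph on `Fin n`, each represented by its unique ordered pair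
`(i, j)` of adjacent vertices with `i < j`. -/
abbrev EdgeIdx {n : ℕ} (G : SimpleGraph (Fin n)) : Type :=
  {p : Fin n × Fin n // G.Adj p.1 p.2 ∧ p.1 < p.2}

/-- The chart domain `U`: chart configurations (every `(3,4)` entry equal to `1`)
consisting of rank-3 cameras, such that on every edge the `(3,3)` entry of the
fundamental matrix is nonzero. -/
def chartDomain {n : ℕ} (G : SimpleGraph (Fin n)) : Set (Config n) :=
  {P | (∀ i, P i 2 3 = 1) ∧ (∀ i, (P i).rank = 3) ∧
    ∀ i j : Fin n, G.Adj i j → fund (P i) (P j) 2 2 ≠ 0}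

/-- The affine fundamental-matrix map `𝓕_G^aff`: on each edge, the fundamental
matrix divided by its `(3,3)` entry. -/
noncomputable def Faff {n : ℕ} (G : SimpleGraph (Fin n)) (P : Config n) :
    EdgeIdx G → Matrix (Fin 3) (Fin 3) ℂ := fun e =>
  (fund (P e.1.1) (P e.1.2) 2 2)⁻¹ • fund (P e.1.1) (P e.1.2)

/-- The tuples of `3 × 4` matrices whose `(3,4)` entries vanish: the directions
tangent to the chart configurations. -/
noncomputable def chartDirections (n : ℕ) : Submodule ℂ (Config n) where
  carrier := {H | ∀ i, H i 2 3 = 0}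
  add_mem' := by
    intro a b ha hb
    intro i
    simp [ha i, hb i]
  zero_mem' := by intro i; simp
  smul_mem' := by
    intro c a ha
    intro i
    simp [ha i]

/-- The index set of the free entries of a chart configuration: all matrix
entries except the fixed `(3,4)` entry of each camera. -/
abbrev FreeIdx (n : ℕ) : Type :=
  Fin n × {rc : Fin 3 × Fin 4 // rc ≠ ((2 : Fin 3), (3 : Fin 4))}

noncomputable def polyMap {ν ι : Type*} (Φ : ι → MvPolynomial ν ℂ) (x : ν → ℂ) : ι → ℂ :=
  fun i => MvPolynomial.eval x (Φ i)

theorem contDiff_eval {ν : Type*} [Fintype ν] (p : MvPolynomial ν ℂ) {m : WithTop ℕ∞} :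
    ContDiff ℂ m (fun x : ν → ℂ => MvPolynomial.eval x p) := by
  induction p using MvPolynomial.induction_on with
  | C a => simpa using contDiff_const
  | add p q hp hq => simpa using hp.add hq
  | mul_X p i hp => simpa using hp.mul (contDiff_apply ℂ ℂ i)

theorem contDiff_polyMap {ν ι : Type*} [Fintype ν] [Fintype ι] (Φ : ι → MvPolynomial ν ℂ)
    {m : WithTop ℕ∞} : ContDiff ℂ m (polyMap Φ) :=
  contDiff_pi.2 fun i => contDiff_eval (Φ i)

theorem fderiv_eval_single {ν : Type*} [Fintype ν] [DecidableEq ν] (p : MvPolynomial ν ℂ)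
    (x : ν → ℂ) (j : ν) :
    fderiv ℂ (fun x : ν → ℂ => MvPolynomial.eval x p) x (Pi.single j 1) =
      MvPolynomial.eval x (MvPolynomial.pderiv j p) := by
  induction p using MvPolynomial.induction_on with
  | C a => simp
  | add p q hp hq =>
    have h1 := ((contDiff_eval p (m := 1)).differentiable (by simp)) x
    have h2 := ((contDiff_eval q (m := 1)).differentiable (by simp)) x
    simp only [map_add]
    rw [fderiv_fun_add h1 h2]
    simp [hp, hq]
  | mul_X p i hp =>
    have h1 := ((contDiff_eval p (m := 1)).differentiable (by simp)) x
    have h2 : HasFDerivAt (fun x : ν → ℂ => x i) (ContinuousLinearMap.proj (R := ℂ) i) x :=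
      hasFDerivAt_apply i x
    simp only [map_mul, MvPolynomial.eval_X]
    rw [fderiv_fun_mul h1 h2.differentiableAt, h2.fderiv]
    simp [hp, Pi.single_apply, MvPolynomial.pderiv_X]
    by_cases h : i = j <;> simp [h]

/-- Polynomial certificate for injectivity of the Jacobian. -/
theorem exists_minor {ν ι : Type*} [Fintype ν] [Fintype ι] (Φ : ι → MvPolynomial ν ℂ)
    (x₀ : ν → ℂ) (h : Function.Injective (fderiv ℂ (polyMap Φ) x₀)) :
    ∃ m : MvPolynomial ν ℂ, MvPolynomial.eval x₀ m ≠ 0 ∧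
      ∀ x, MvPolynomial.eval x m ≠ 0 → Function.Injective (fderiv ℂ (polyMap Φ) x) := by
  classical
  obtain ⟨L, hL⟩ := LinearMap.exists_leftInverse_of_injective
    (fderiv ℂ (polyMap Φ) x₀).toLinearMap (LinearMap.ker_eq_bot.2 h)
  let M : Matrix ν ν (MvPolynomial ν ℂ) := Matrix.of fun a b =>
    ∑ i, MvPolynomial.C (L (Pi.single i 1) a) * MvPolynomial.pderiv b (Φ i)
  have hM : ∀ x, (M.map (MvPolynomial.eval x)) =
      LinearMap.toMatrix' (L ∘ₗ (fderiv ℂ (polyMap Φ) x).toLinearMap) := by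
    intro x
    ext a b
    have hd := fun i => ((contDiff_eval (Φ i) (m := 1)).differentiable (by simp)) x
    have hf : fderiv ℂ (polyMap Φ) x =
      ContinuousLinearMap.pi fun i => fderiv ℂ (fun x : ν → ℂ => MvPolynomial.eval x (Φ i)) x :=
      fderiv_pi hd
    rw [LinearMap.toMatrix'_apply]
    simp only [M, Matrix.map_apply, Matrix.of_apply, map_sum, map_mul, MvPolynomial.eval_C,
      ← fderiv_eval_single]
    rw [hf]
    have : ∀ w : ι → ℂ, L w a = ∑ i, L (Pi.single i 1) a * w i := by
      intro w
      conv_lhs => rw [← Finset.univ_sum_single w]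
      rw [map_sum, Finset.sum_apply]
      refine Finset.sum_congr rfl fun i _ => ?_
      rw [show (Pi.single i (w i) : ι → ℂ) = w i • Pi.single i 1 by
        rw [← Pi.single_smul]; simp]
      simp [mul_comm]
    rw [LinearMap.comp_apply, this]
    refine Finset.sum_congr rfl fun i _ => ?_
    simp
  have hdet : ∀ x, MvPolynomial.eval x M.det =
      LinearMap.det (L ∘ₗ (fderiv ℂ (polyMap Φ) x).toLinearMap) := by
    intro x
    rw [RingHom.map_det, RingHom.mapMatrix_apply, hM, LinearMap.det_toMatrix']
  refine ⟨M.det, ?_, ?_⟩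
  · rw [hdet, hL]; simp
  · intro x hx
    rw [hdet] at hx
    have hu : Function.Injective (L ∘ₗ (fderiv ℂ (polyMap Φ) x).toLinearMap) := by
      have := (LinearEquiv.ofIsUnitDet (f := L ∘ₗ (fderiv ℂ (polyMap Φ) x).toLinearMap)
        (v := Pi.basisFun ℂ ν) (v' := Pi.basisFun ℂ ν)
        (by rw [LinearMap.toMatrix_eq_toMatrix', LinearMap.det_toMatrix']; exact hx.isUnit)).injective
      exact this
    exact Function.Injective.of_comp (f := L) hu

theorem mvpoly_eq_zero_of_nhds {ν : Type*} [Fintype ν] (p : MvPolynomial ν ℂ) (y : ν → ℂ)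
    (h : ∀ᶠ z in nhds y, MvPolynomial.eval z p = 0) : p = 0 := by
  obtain ⟨ε, hε, hb⟩ := Metric.eventually_nhds_iff_ball.1 h
  refine MvPolynomial.funext_set (fun i => Metric.ball (y i) ε) (fun i => ?_) ?_
  · exact Set.Infinite.mono (fun _ h => h) (infinite_of_mem_nhds (y i) (Metric.ball_mem_nhds _ hε))
  · intro x hx
    rw [map_zero]
    apply hb
    rw [ball_pi _ hε]
    exact hx

theorem algInd_of_jac {ν : Type*} [Fintype ν] (g : ν → MvPolynomial ν ℂ)
    (x₀ : ν → ℂ) (h : Function.Injective (fderiv ℂ (polyMap g) x₀)) :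
    AlgebraicIndependent ℂ g := by
  rw [algebraicIndependent_iff]
  intro c hc
  have h1 := (contDiff_polyMap g (m := 1)).contDiffAt.hasStrictFDerivAt (x := x₀) (by simp)
  have hm := h1.map_nhds_eq_of_surj (LinearMap.range_eq_top.2
    (LinearMap.injective_iff_surjective.1 h))
  apply mvpoly_eq_zero_of_nhds c (polyMap g x₀)
  rw [← hm, Filter.eventually_map]
  refine Filter.Eventually.of_forall fun x => ?_
  have := congrArg (MvPolynomial.eval x) hc
  rw [map_zero] at this
  rw [← this]
  clear this hc
  induction c using MvPolynomial.induction_on with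
  | C a => simp
  | add p q hp hq => simp [hp, hq]
  | mul_X p i hp => simp [hp, polyMap]

/-- Generic finiteness of the fibres of a polynomial map with injective Jacobian: square case. -/
theorem finite_fibre_square {ν : Type*} [Fintype ν] (g : ν → MvPolynomial ν ℂ)
    (x₀ : ν → ℂ) (h : Function.Injective (fderiv ℂ (polyMap g) x₀)) :
    ∃ p : MvPolynomial ν ℂ, p ≠ 0 ∧ ∀ x, MvPolynomial.eval x p ≠ 0 →
      {y | polyMap g y = polyMap g x}.Finite := by
  classical
  have hai := algInd_of_jac g x₀ h
  have htb : IsTranscendenceBasis ℂ g := hai.isTranscendenceBasis_of_lift_trdeg_le_of_finite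
    (by rw [MvPolynomial.trdeg_of_isDomain]; simp)
  have halg := htb.isAlgebraic
  have hq : ∀ j : ν, ∃ q : Polynomial (Algebra.adjoin ℂ (Set.range g)), q ≠ 0 ∧
      Polynomial.aeval (MvPolynomial.X j : MvPolynomial ν ℂ) q = 0 :=
    fun j => halg.isAlgebraic (MvPolynomial.X j)
  choose q hq0 hq using hq
  refine ⟨∏ j, ((q j).leadingCoeff : MvPolynomial ν ℂ), ?_, ?_⟩
  · rw [Finset.prod_ne_zero_iff]
    intro j _ hj
    apply hq0 j
    rw [← Polynomial.leadingCoeff_eq_zero]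
    exact Subtype.ext hj
  · intro x hx
    rw [map_prod, Finset.prod_ne_zero_iff] at hx
    let A := Algebra.adjoin ℂ (Set.range g)
    let ev : (ν → ℂ) → (A →+* ℂ) := fun y => (MvPolynomial.eval y).comp A.val.toRingHom
    have hev : ∀ y, polyMap g y = polyMap g x → ev y = ev x := by
      intro y hy
      ext ⟨a, ha⟩
      change MvPolynomial.eval y a = MvPolynomial.eval x a
      induction ha using Algebra.adjoin_induction with
      | mem a ha => obtain ⟨i, rfl⟩ := ha; exact congrFun hy i
      | algebraMap r => simp [MvPolynomial.algebraMap_eq]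
      | add a b _ _ h1 h2 => simp [h1, h2]
      | mul a b _ _ h1 h2 => simp [h1, h2]
    have hne : ∀ j, (q j).map (ev x) ≠ 0 := by
      intro j h0
      have := congrArg (fun p => Polynomial.coeff p (q j).natDegree) h0
      simp only [Polynomial.coeff_map, Polynomial.coeff_zero] at this
      exact hx j (Finset.mem_univ j) this
    refine Set.Finite.subset (Set.Finite.pi' (t := fun j => {z | ((q j).map (ev x)).IsRoot z})
      fun j => ?_) ?_
    · exact Polynomial.finite_setOfPred_isRoot (hne j)
    · intro y hy j
      have h2 := congrArg (MvPolynomial.eval y) (hq j)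
      rw [map_zero, Polynomial.aeval_def] at h2
      change Polynomial.eval (y j) ((q j).map (ev x)) = 0
      rw [← hev y hy, Polynomial.eval_map, ← h2, Polynomial.hom_eval₂]
      simp [ev]
      rfl

theorem finite_fibre {ν ι : Type*} [Fintype ν] [Fintype ι] (Φ : ι → MvPolynomial ν ℂ)
    (x₀ : ν → ℂ) (h : Function.Injective (fderiv ℂ (polyMap Φ) x₀)) :
    ∃ p : MvPolynomial ν ℂ, p ≠ 0 ∧ ∀ x, MvPolynomial.eval x p ≠ 0 →
      {y | polyMap Φ y = polyMap Φ x}.Finite := by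
  classical
  obtain ⟨L, hL⟩ := LinearMap.exists_leftInverse_of_injective
    (fderiv ℂ (polyMap Φ) x₀).toLinearMap (LinearMap.ker_eq_bot.2 h)
  let g : ν → MvPolynomial ν ℂ := fun a => ∑ i, MvPolynomial.C (L (Pi.single i 1) a) * Φ i
  have hL' : ∀ (w : ι → ℂ) a, L w a = ∑ i, L (Pi.single i 1) a * w i := by
    intro w a
    conv_lhs => rw [← Finset.univ_sum_single w]
    rw [map_sum, Finset.sum_apply]
    refine Finset.sum_congr rfl fun i _ => ?_
    rw [show (Pi.single i (w i) : ι → ℂ) = w i • Pi.single i 1 by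
      rw [← Pi.single_smul]; simp]
    simp [mul_comm]
  let L' : (ι → ℂ) →L[ℂ] (ν → ℂ) := LinearMap.toContinuousLinearMap L
  have hg : polyMap g = L' ∘ polyMap Φ := by
    funext x a
    change _ = L (polyMap Φ x) a
    rw [hL']
    simp [polyMap, g]
  have hinj : Function.Injective (fderiv ℂ (polyMap g) x₀) := by
    rw [hg, fderiv_comp _ L'.differentiableAt
      (((contDiff_polyMap Φ (m := 1)).differentiable (by simp)) x₀), L'.fderiv]
    intro v w hvw
    have hv := LinearMap.congr_fun hL v
    have hw := LinearMap.congr_fun hL w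
    simp only [LinearMap.comp_apply, LinearMap.id_apply] at hv hw
    rw [← hv, ← hw]
    exact hvw
  obtain ⟨p, hp, hfin⟩ := finite_fibre_square g x₀ hinj
  refine ⟨p, hp, fun x hx => (hfin x hx).subset fun y hy => ?_⟩
  simp only [Set.mem_ofPred_eq] at hy ⊢
  rw [hg, Function.comp_apply, Function.comp_apply, hy]

theorem infinite_fibre_aux {E F : Type*} [NormedAddCommGroup E] [NormedSpace ℂ E]
    [FiniteDimensional ℂ E] [NormedAddCommGroup F] [NormedSpace ℂ F] [FiniteDimensional ℂ F]
    (f : E → F) (hf : ContDiff ℂ 1 f) (hno : ∀ x, ¬ Function.Injective (fderiv ℂ f x))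
    (W : Set E) (hW : IsOpen W) (hne : W.Nonempty) :
    ∃ x ∈ W, {y | y ∈ W ∧ f y = f x}.Infinite := by
  have : CompleteSpace E := FiniteDimensional.complete ℂ E
  have : CompleteSpace F := FiniteDimensional.complete ℂ F
  -- a point of maximal rank
  obtain ⟨x, hxW, hmax⟩ : ∃ x ∈ W, ∀ y ∈ W,
      Module.finrank ℂ (LinearMap.range (fderiv ℂ f y).toLinearMap) ≤
        Module.finrank ℂ (LinearMap.range (fderiv ℂ f x).toLinearMap) := by
    let ρ : E → ℕ := fun y => Module.finrank ℂ (LinearMap.range (fderiv ℂ f y).toLinearMap)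
    have hb : BddAbove (ρ '' W) := ⟨Module.finrank ℂ F, by
      rintro _ ⟨y, _, rfl⟩; exact Submodule.finrank_le _⟩
    obtain ⟨x, hx, hxe⟩ := Nat.sSup_mem (hne.image ρ) hb
    exact ⟨x, hx, fun y hy => by
      have := le_csSup hb (Set.mem_image_of_mem ρ hy); rw [← hxe] at this; exact this⟩
  refine ⟨x, hxW, ?_⟩
  set A := fderiv ℂ f x with hA
  let R := LinearMap.range A.toLinearMap
  let K := LinearMap.ker A.toLinearMap
  obtain ⟨π₀, hπ₀⟩ := LinearMap.exists_leftInverse_of_injective R.subtype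
    (Submodule.ker_subtype R)
  obtain ⟨σ₀, hσ₀⟩ := LinearMap.exists_leftInverse_of_injective K.subtype
    (Submodule.ker_subtype K)
  let π : F →L[ℂ] R := LinearMap.toContinuousLinearMap π₀
  let σ : E →L[ℂ] K := LinearMap.toContinuousLinearMap σ₀
  have hπ : ∀ r : R, π r = r := fun r => LinearMap.congr_fun hπ₀ r
  have hσ : ∀ r : K, σ r = r := fun r => LinearMap.congr_fun hσ₀ r
  let Ψ : E → R × K := fun y => (π (f y), σ y)
  have hΨ : ContDiff ℂ 1 Ψ := (π.contDiff.comp hf).prodMk σ.contDiff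
  have hfd : ∀ y, HasFDerivAt f (fderiv ℂ f y) y :=
    fun y => ((hf.differentiable (by simp)) y).hasFDerivAt
  have hΨd : ∀ y, HasFDerivAt Ψ ((π.comp (fderiv ℂ f y)).prod σ) y := fun y =>
    (π.hasFDerivAt.comp y (hfd y)).prodMk σ.hasFDerivAt
  have hinj : Function.Injective ((π.comp A).prod σ) := by
    rw [injective_iff_map_eq_zero]
    intro v hv
    have h1 : π (A v) = 0 := congrArg Prod.fst hv
    have h2 : σ v = 0 := congrArg Prod.snd hv
    have h3 : A v = 0 := by
      have := hπ ⟨A v, LinearMap.mem_range_self A.toLinearMap v⟩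
      rw [h1] at this
      exact (congrArg Subtype.val this).symm
    have := hσ ⟨v, h3⟩
    rw [h2] at this
    exact (congrArg Subtype.val this).symm
  have hdim : Module.finrank ℂ E = Module.finrank ℂ (R × K) := by
    rw [Module.finrank_prod]
    exact (LinearMap.finrank_range_add_finrank_ker A.toLinearMap).symm
  let e : E ≃L[ℂ] (R × K) := (LinearEquiv.ofInjectiveOfFinrankEq
    ((π.comp A).prod σ).toLinearMap hinj hdim).toContinuousLinearEquiv
  have he : (e : E →L[ℂ] R × K) = (π.comp A).prod σ := by
    ext v <;> rfl
  have hd : HasFDerivAt Ψ (e : E →L[ℂ] R × K) x := by rw [he]; exact hΨd x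
  let θ := (hΨ.contDiffAt (x := x)).toOpenPartialHomeomorph Ψ hd one_ne_zero
  have hθ : ∀ y, θ y = Ψ y := fun y => rfl
  have hxs : x ∈ θ.source := ContDiffAt.mem_toOpenPartialHomeomorph_source _ hd one_ne_zero
  have hxt : Ψ x ∈ θ.target := ContDiffAt.image_mem_toOpenPartialHomeomorph_target _ hd one_ne_zero
  have hsymm : ContDiffAt ℂ 1 θ.symm (Ψ x) :=
    ContDiffAt.to_localInverse (hΨ.contDiffAt (x := x)) hd one_ne_zero
  have hsx : θ.symm (Ψ x) = x := θ.left_inv hxs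
  -- good neighbourhood
  have hgood : ∀ᶠ y in nhds x, ∀ v, π (fderiv ℂ f y v) = 0 → fderiv ℂ f y v = 0 := by
    have hc : Continuous fun y => fderiv ℂ Ψ y := hΨ.continuous_fderiv one_ne_zero
    have h1 : ∀ᶠ y in nhds x, fderiv ℂ Ψ y ∈
        Set.range ((↑) : (E ≃L[ℂ] R × K) → (E →L[ℂ] R × K)) := by
      apply hc.continuousAt.eventually
      change _ ∈ nhds (fderiv ℂ Ψ x)
      rw [hd.fderiv]
      exact ContinuousLinearEquiv.nhds e
    filter_upwards [h1, hW.mem_nhds hxW] with y hy hyW v hv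
    obtain ⟨e', he'⟩ := hy
    rw [(hΨd y).fderiv] at he'
    let B := (fderiv ℂ f y).toLinearMap
    let ρ : LinearMap.range B →ₗ[ℂ] R := π.toLinearMap.domRestrict _
    have hsurj : Function.Surjective ρ := by
      intro r
      obtain ⟨w, hw⟩ := e'.surjective (r, 0)
      refine ⟨⟨B w, LinearMap.mem_range_self B w⟩, ?_⟩
      have : (e' : E →L[ℂ] R × K) w = (r, 0) := hw
      rw [he'] at this
      exact congrArg Prod.fst this
    have hle : Module.finrank ℂ R ≤ Module.finrank ℂ (LinearMap.range B) :=
      LinearMap.finrank_le_finrank_of_surjective hsurj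
    have heq : Module.finrank ℂ (LinearMap.range B) = Module.finrank ℂ R :=
      le_antisymm (hmax y hyW) hle
    have hinj' := (LinearMap.injective_iff_surjective_of_finrank_eq_finrank heq).2 hsurj
    have h0 : ρ ⟨B v, LinearMap.mem_range_self B v⟩ = ρ 0 := by
      rw [map_zero]; exact hv
    exact congrArg Subtype.val (hinj' h0)
  -- parametrise
  let c : R := π (f x)
  let j : K → R × K := fun k => (c, k)
  have hjc : ContDiff ℂ 1 j := contDiff_const.prodMk contDiff_id
  have hev : ∀ᶠ z in nhds (Ψ x), z ∈ θ.target ∧ DifferentiableAt ℂ θ.symm z ∧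
      θ.symm z ∈ W ∧ ∀ v, π (fderiv ℂ f (θ.symm z) v) = 0 → fderiv ℂ f (θ.symm z) v = 0 := by
    have h1 := θ.open_target.mem_nhds hxt
    have h2 := hsymm.eventually (by simp)
    have h3 : Filter.Tendsto θ.symm (nhds (Ψ x)) (nhds x) := by
      have := hsymm.continuousAt
      rwa [ContinuousAt, hsx] at this
    filter_upwards [h1, h2, h3.eventually hgood, h3.eventually (hW.mem_nhds hxW)] with
      z a b d e
    exact ⟨a, b.differentiableAt (by simp), e, d⟩
  have hev' : ∀ᶠ k in nhds (σ x), j k ∈ θ.target ∧ DifferentiableAt ℂ θ.symm (j k) ∧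
      θ.symm (j k) ∈ W ∧ ∀ v, π (fderiv ℂ f (θ.symm (j k)) v) = 0 →
        fderiv ℂ f (θ.symm (j k)) v = 0 :=
    (hjc.continuous.continuousAt (x := σ x)).eventually hev
  obtain ⟨ε, hε, hball⟩ := Metric.eventually_nhds_iff_ball.1 hev'
  let ψ : K → E := fun k => θ.symm (j k)
  have hψΨ : ∀ k ∈ Metric.ball (σ x) ε, Ψ (ψ k) = j k := fun k hk => θ.right_inv (hball k hk).1
  have hψd : ∀ k ∈ Metric.ball (σ x) ε, DifferentiableAt ℂ ψ k := fun k hk =>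
    (hball k hk).2.1.comp k (hjc.differentiable (by simp) k)
  have hfψ : ∀ k ∈ Metric.ball (σ x) ε, HasFDerivAt (f ∘ ψ) (0 : K →L[ℂ] F) k := by
    intro k hk
    have h1 := (hfd (ψ k)).comp k (hψd k hk).hasFDerivAt
    have h2 := π.hasFDerivAt.comp k h1
    have h3 : HasFDerivAt (π ∘ f ∘ ψ) (0 : K →L[ℂ] R) k := by
      refine (hasFDerivAt_const c k).congr_of_eventuallyEq ?_
      filter_upwards [Metric.isOpen_ball.mem_nhds hk] with k' hk'
      exact congrArg Prod.fst (hψΨ k' hk')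
    have h4 := h2.unique h3
    have h5 : (fderiv ℂ f (ψ k)).comp (fderiv ℂ ψ k) = 0 := by
      ext v
      exact (hball k hk).2.2.2 _ (DFunLike.congr_fun h4 v)
    rwa [h5] at h1
  have hconst : ∀ k ∈ Metric.ball (σ x) ε, f (ψ k) = f x := by
    intro k hk
    have := Metric.isOpen_ball.is_const_of_fderiv_eq_zero (𝕜 := ℂ) (f := f ∘ ψ)
      (convex_ball (σ x) ε).isPreconnected
      (fun k hk => (hfψ k hk).differentiableAt.differentiableWithinAt)
      (fun k hk => (hfψ k hk).fderiv) hk (Metric.mem_ball_self hε)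
    rw [Function.comp_apply, Function.comp_apply] at this
    rw [this]
    exact congrArg f hsx
  have hKnt : Nontrivial K := by
    rw [Submodule.nontrivial_iff_ne_bot]
    intro h
    exact hno x (LinearMap.ker_eq_bot.1 h)
  have : (nhdsWithin (σ x) {σ x}ᶜ).NeBot := Module.punctured_nhds_neBot ℂ K (σ x)
  have hinf : (Metric.ball (σ x) ε).Infinite :=
    infinite_of_mem_nhds (σ x) (Metric.ball_mem_nhds _ hε)
  have hinjψ : Set.InjOn ψ (Metric.ball (σ x) ε) := by
    intro k hk k' hk' h
    have := hψΨ k hk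
    rw [h, hψΨ k' hk'] at this
    exact (congrArg Prod.snd this).symm
  refine (hinf.image hinjψ).mono ?_
  rintro _ ⟨k, hk, rfl⟩
  exact ⟨(hball k hk).2.2.1, hconst k hk⟩

theorem infinite_fibre {ν ι : Type*} [Fintype ν] [Fintype ι] (Φ : ι → MvPolynomial ν ℂ)
    (hno : ∀ x, ¬ Function.Injective (fderiv ℂ (polyMap Φ) x))
    (w : MvPolynomial ν ℂ) (hw : w ≠ 0) :
    ∃ x, MvPolynomial.eval x w ≠ 0 ∧
      {y | MvPolynomial.eval y w ≠ 0 ∧ polyMap Φ y = polyMap Φ x}.Infinite := by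
  obtain ⟨x₀, hx₀⟩ : ∃ x, MvPolynomial.eval x w ≠ 0 := by
    by_contra! h
    exact hw (MvPolynomial.funext fun x => by simpa using h x)
  have hcont : Continuous fun x : ν → ℂ => MvPolynomial.eval x w :=
    (contDiff_eval w (m := 1)).continuous
  obtain ⟨x, hx, hinf⟩ := infinite_fibre_aux (polyMap Φ) (contDiff_polyMap Φ) hno
    {x | MvPolynomial.eval x w ≠ 0} (isOpen_ne.preimage hcont) ⟨x₀, hx₀⟩
  exact ⟨x, hx, hinf⟩

/-- The stacked matrix. -/
def stk {K : Type*} (P Q : Matrix (Fin 3) (Fin 4) K) (h k : Fin 3) : Matrix (Fin 4) (Fin 4) K :=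
  Matrix.of ![P (k.succAbove 0), P (k.succAbove 1), Q (h.succAbove 0), Q (h.succAbove 1)]

theorem fund_eq_stk {K : Type*} [CommRing K] (P Q : Matrix (Fin 3) (Fin 4) K) (h k : Fin 3) :
    fund P Q h k = (-1 : K) ^ ((h : ℕ) + (k : ℕ)) * (stk P Q h k).det := by
  unfold fund
  rw [Matrix.of_apply]
  congr 2
  ext r c
  fin_cases r <;> simp [stk]

theorem fund_map {K L : Type*} [CommRing K] [CommRing L] (f : K →+* L)
    (P Q : Matrix (Fin 3) (Fin 4) K) (h k : Fin 3) :
    fund (P.map f) (Q.map f) h k = f (fund P Q h k) := by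
  rw [fund_eq_stk, fund_eq_stk, map_mul, RingHom.map_det]
  simp only [map_pow, map_neg, map_one]
  congr 2
  ext r c
  fin_cases r <;> simp [stk]

theorem fund_mul {K : Type*} [CommRing K] (P Q : Matrix (Fin 3) (Fin 4) K)
    (B : Matrix (Fin 4) (Fin 4) K) : fund (P * B) (Q * B) = B.det • fund P Q := by
  ext h k
  rw [Matrix.smul_apply, fund_eq_stk, fund_eq_stk]
  have : stk (P * B) (Q * B) h k = stk P Q h k * B := by
    ext r c
    fin_cases r <;> simp [stk, Matrix.mul_apply]
  rw [this, Matrix.det_mul, smul_eq_mul]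
  ring

theorem fund_smul {K : Type*} [CommRing K] (P Q : Matrix (Fin 3) (Fin 4) K)
    (a b : K) : fund (a • P) (b • Q) = (a ^ 2 * b ^ 2) • fund P Q := by
  ext h k
  rw [Matrix.smul_apply, fund_eq_stk, fund_eq_stk]
  have : stk (a • P) (b • Q) h k = Matrix.diagonal ![a, a, b, b] * stk P Q h k := by
    ext r c
    fin_cases r <;> simp [stk, Matrix.diagonal_mul]
  rw [this, Matrix.det_mul, smul_eq_mul, Matrix.det_diagonal]
  simp [Fin.prod_univ_succ]
  ring

theorem fund_swap {K : Type*} [CommRing K] (P Q : Matrix (Fin 3) (Fin 4) K) :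
    fund Q P = (fund P Q)ᵀ := by
  ext h k
  rw [Matrix.transpose_apply, fund_eq_stk, fund_eq_stk, add_comm]
  congr 1
  simp [stk, Matrix.det_succ_row_zero, Fin.sum_univ_succ, Fin.succAbove]
  ring

/-- polar form of `fund` -/
def dfund {K : Type*} [CommRing K] (P Q X Y : Matrix (Fin 3) (Fin 4) K) :
    Matrix (Fin 3) (Fin 3) K :=
  (fund (P + X) Q - fund P Q - fund X Q) + (fund P (Q + Y) - fund P Q - fund P Y)

theorem fund_add_smul {K : Type*} [CommRing K] (P Q X : Matrix (Fin 3) (Fin 4) K) (t : K) :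
    fund (P + t • X) Q =
      fund P Q + t • (fund (P + X) Q - fund P Q - fund X Q) + t ^ 2 • fund X Q := by
  ext h k
  simp only [Matrix.add_apply, Matrix.smul_apply, Matrix.sub_apply, fund_eq_stk, smul_eq_mul]
  have : (stk (P + t • X) Q h k).det = (stk P Q h k).det + t * ((stk (P + X) Q h k).det -
    (stk P Q h k).det - (stk X Q h k).det) + t ^ 2 * (stk X Q h k).det := by
    simp only [stk, Matrix.det_succ_row_zero, Fin.sum_univ_succ]
    simp [Fin.succAbove]
    ring
  rw [this]
  ring

theorem fund_add_smul_right {K : Type*} [CommRing K] (P Q Y : Matrix (Fin 3) (Fin 4) K) (t : K) :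
    fund P (Q + t • Y) =
      fund P Q + t • (fund P (Q + Y) - fund P Q - fund P Y) + t ^ 2 • fund P Y := by
  rw [fund_swap (Q + t • Y) P, fund_add_smul, fund_swap Q P, fund_swap (Q + Y) P, fund_swap Y P]
  simp [Matrix.transpose_sub]

theorem fund_line {K : Type*} [CommRing K] (P Q X Y : Matrix (Fin 3) (Fin 4) K) :
    ∃ R₀ R₁ R₂ : Matrix (Fin 3) (Fin 3) K, ∀ t : K, fund (P + t • X) (Q + t • Y) =
      fund P Q + t • dfund P Q X Y + t ^ 2 • (R₀ + t • R₁ + t ^ 2 • R₂) := by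
  let b : Matrix (Fin 3) (Fin 4) K → Matrix (Fin 3) (Fin 3) K :=
    fun A => fund A (Q + Y) - fund A Q - fund A Y
  refine ⟨b (P + X) - b P - b X + fund P Y + fund X Q,
    (fund (P + X) Y - fund P Y - fund X Y) + b X, fund X Y, fun t => ?_⟩
  rw [fund_add_smul]
  simp only [fund_add_smul_right, b, dfund]
  ext h k
  simp only [Matrix.add_apply, Matrix.smul_apply, Matrix.sub_apply, smul_eq_mul]
  ring

theorem hasDerivAt_fund (P Q X Y : Matrix (Fin 3) (Fin 4) ℂ) (h k : Fin 3) :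
    HasDerivAt (fun t : ℂ => fund (P + t • X) (Q + t • Y) h k) (dfund P Q X Y h k) 0 := by
  obtain ⟨R₀, R₁, R₂, hR⟩ := fund_line P Q X Y
  simp only [hR, Matrix.add_apply, Matrix.smul_apply, smul_eq_mul]
  have h1 := hasDerivAt_id (𝕜 := ℂ) 0
  have h2 := ((h1.mul_const (dfund P Q X Y h k)).const_add (fund P Q h k)).add
    ((h1.pow 2).mul (((h1.mul_const (R₁ h k)).const_add (R₀ h k)).add
      ((h1.pow 2).mul_const (R₂ h k))))
  have h5 : dfund P Q X Y h k = 1 * dfund P Q X Y h k +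
    ((↑(2:ℕ) * (id (0:ℂ)) ^ (2 - 1) * 1) * ((R₀ h k + id 0 * R₁ h k) + (id 0) ^ 2 * R₂ h k) +
      (id (0:ℂ)) ^ 2 * (1 * R₁ h k + (↑(2:ℕ) * (id (0:ℂ)) ^ (2 - 1) * 1) * R₂ h k)) := by
    simp
  exact HasDerivAt.congr_deriv h2 h5.symm

theorem det_rows_add0 {K : Type*} [CommRing K] (a a' b c d : Fin 4 → K) :
    (Matrix.of ![a + a', b, c, d]).det = (Matrix.of ![a, b, c, d]).det +
      (Matrix.of ![a', b, c, d]).det := by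
  have h : ∀ x, Matrix.of ![x, b, c, d] = (Matrix.of ![0, b, c, d]).updateRow 0 x := by
    intro x; ext i j; fin_cases i <;> simp [Matrix.updateRow_apply]
  rw [h, h a, h a', Matrix.det_updateRow_add]

theorem det_rows_add1 {K : Type*} [CommRing K] (a b b' c d : Fin 4 → K) :
    (Matrix.of ![a, b + b', c, d]).det = (Matrix.of ![a, b, c, d]).det +
      (Matrix.of ![a, b', c, d]).det := by
  have h : ∀ x, Matrix.of ![a, x, c, d] = (Matrix.of ![a, 0, c, d]).updateRow 1 x := by
    intro x; ext i j; fin_cases i <;> simp [Matrix.updateRow_apply]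
  rw [h, h b, h b', Matrix.det_updateRow_add]

theorem fund_polar {K : Type*} [CommRing K] (P Q X Z : Matrix (Fin 3) (Fin 4) K) :
    fund (P + X + Z) Q = fund (P + X) Q + fund (P + Z) Q + fund (X + Z) Q
      - fund P Q - fund X Q - fund Z Q := by
  ext h k
  simp only [Matrix.add_apply, Matrix.sub_apply, fund_eq_stk]
  have : (stk (P + X + Z) Q h k).det = (stk (P + X) Q h k).det + (stk (P + Z) Q h k).det +
    (stk (X + Z) Q h k).det - (stk P Q h k).det - (stk X Q h k).det - (stk Z Q h k).det := by
    have hadd : ∀ (A B : Matrix (Fin 3) (Fin 4) K) (i : Fin 3), (A + B) i = A i + B i :=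
      fun _ _ _ => rfl
    simp only [stk, hadd, det_rows_add0, det_rows_add1]
    ring
  rw [this]
  ring

theorem fund_polar_right {K : Type*} [CommRing K] (P Q Y Z : Matrix (Fin 3) (Fin 4) K) :
    fund P (Q + Y + Z) = fund P (Q + Y) + fund P (Q + Z) + fund P (Y + Z)
      - fund P Q - fund P Y - fund P Z := by
  have := congrArg Matrix.transpose (fund_polar Q P Y Z)
  simpa only [Matrix.transpose_add, Matrix.transpose_sub, ← fund_swap] using this

theorem dfund_add {K : Type*} [CommRing K] (P Q X Y X' Y' : Matrix (Fin 3) (Fin 4) K) :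
    dfund P Q (X + X') (Y + Y') = dfund P Q X Y + dfund P Q X' Y' := by
  unfold dfund
  rw [← add_assoc P, ← add_assoc Q, fund_polar, fund_polar_right]
  abel

theorem dfund_scale {K : Type*} [CommRing K] (P Q X Y : Matrix (Fin 3) (Fin 4) K) (a b : K) :
    dfund (a • P) (b • Q) (a • X) (b • Y) = (a ^ 2 * b ^ 2) • dfund P Q X Y := by
  unfold dfund
  rw [← smul_add, ← smul_add]
  simp only [fund_smul]
  module

theorem fund_smul_left {K : Type*} [CommRing K] (P Q : Matrix (Fin 3) (Fin 4) K) (a : K) :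
    fund (a • P) Q = a ^ 2 • fund P Q := by
  have := fund_smul P Q a 1
  simpa using this

theorem fund_smul_right {K : Type*} [CommRing K] (P Q : Matrix (Fin 3) (Fin 4) K) (a : K) :
    fund P (a • Q) = a ^ 2 • fund P Q := by
  have := fund_smul P Q 1 a
  simpa using this

theorem dfund_smul {K : Type*} [CommRing K] (P Q X Y : Matrix (Fin 3) (Fin 4) K) (a : K) :
    dfund P Q (a • X) (a • Y) = a • dfund P Q X Y := by
  unfold dfund
  rw [fund_add_smul, fund_add_smul_right, fund_smul_left, fund_smul_right]
  module

theorem dfund_self {K : Type*} [CommRing K] (P Q : Matrix (Fin 3) (Fin 4) K) (a b : K) :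
    dfund P Q (a • P) (b • Q) = (2 * a + 2 * b) • fund P Q := by
  unfold dfund
  rw [show P + a • P = (1 + a) • P by module, show Q + b • Q = (1 + b) • Q by module]
  simp only [fund_smul_left, fund_smul_right]
  module

theorem dfund_mul {K : Type*} [CommRing K] (P Q X Y : Matrix (Fin 3) (Fin 4) K)
    (B : Matrix (Fin 4) (Fin 4) K) :
    dfund (P * B) (Q * B) (X * B) (Y * B) = B.det • dfund P Q X Y := by
  unfold dfund
  rw [← Matrix.add_mul, ← Matrix.add_mul]
  simp only [fund_mul]
  module

theorem dfund_swap {K : Type*} [CommRing K] (P Q X Y : Matrix (Fin 3) (Fin 4) K) :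
    dfund Q P Y X = (dfund P Q X Y)ᵀ := by
  unfold dfund
  simp only [Matrix.transpose_add, Matrix.transpose_sub, ← fund_swap]
  abel

theorem dfund_zero {K : Type*} [CommRing K] (P Q : Matrix (Fin 3) (Fin 4) K) :
    dfund P Q 0 0 = 0 := by
  have := dfund_smul P Q 0 0 0
  simpa using this

theorem dfund_inf (P Q : Matrix (Fin 3) (Fin 4) ℂ) (A : Matrix (Fin 4) (Fin 4) ℂ) :
    dfund P Q (P * A) (Q * A) = A.trace • fund P Q := by
  ext h k
  have h1 := hasDerivAt_fund P Q (P * A) (Q * A) h k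
  have h2 : ∀ t : ℂ, fund (P + t • (P * A)) (Q + t • (Q * A)) h k =
      (1 + t • A).det * fund P Q h k := by
    intro t
    have : ∀ R : Matrix (Fin 3) (Fin 4) ℂ, R + t • (R * A) = R * (1 + t • A) := by
      intro R; rw [Matrix.mul_add, Matrix.mul_one, Matrix.mul_smul]
    rw [this, this, fund_mul, Matrix.smul_apply, smul_eq_mul]
  simp only [h2] at h1
  have hid := hasDerivAt_id (𝕜 := ℂ) 0
  let p := (Matrix.det (1 + (Polynomial.X : Polynomial ℂ) • A.map Polynomial.C)).divX.divX
  have h3 := (((hid.const_mul A.trace).const_add 1).add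
    ((p.hasDerivAt 0).mul (hid.pow 2))).mul_const (fund P Q h k)
  have h5 : (fun t : ℂ => (1 + t • A).det * fund P Q h k) = fun t : ℂ =>
      (1 + A.trace * t + p.eval t * t ^ 2) * fund P Q h k := by
    funext t
    rw [Matrix.det_one_add_smul t A]
  rw [h5] at h1
  have h4 := h1.unique h3
  rw [h4]
  simp

/-- gauge directions are in the kernel -/
theorem dfund_gauge (P Q : Matrix (Fin 3) (Fin 4) ℂ) (A : Matrix (Fin 4) (Fin 4) ℂ) (a b : ℂ) :
    dfund P Q (P * A + a • P) (Q * A + b • Q) = (A.trace + (2 * a + 2 * b)) • fund P Q := by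
  rw [dfund_add, dfund_inf, dfund_self]
  module

/-! ### Normal forms -/

def nP {K : Type*} [CommRing K] (p : Fin 4 → K) : Matrix (Fin 3) (Fin 4) K :=
  Matrix.of ![![1, 0, 0, 0], ![0, 1, 0, 0], p]

def nQ {K : Type*} [CommRing K] (p : Fin 4 → K) : Matrix (Fin 3) (Fin 4) K :=
  Matrix.of ![![0, 0, 1, 0], ![0, 0, 0, 1], p]

theorem fund_nf {K : Type*} [CommRing K] (p q : Fin 4 → K) : fund (nP p) (nQ q) =
    !![p 0 * q 2 - p 2 * q 0, p 1 * q 2 - p 2 * q 1, -q 2;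
       p 0 * q 3 - p 3 * q 0, p 1 * q 3 - p 3 * q 1, -q 3;
       -p 0, -p 1, 1] := by
  ext h k
  rw [fund_eq_stk]
  fin_cases h <;> fin_cases k <;>
  simp [stk, nP, nQ, Matrix.det_succ_row_zero, Fin.sum_univ_succ, Fin.succAbove] <;> ring

theorem fund_row2 {K : Type*} [CommRing K] (u : Fin 4 → K) (Q : Matrix (Fin 3) (Fin 4) K) :
    fund (Matrix.of ![0, 0, u]) Q = 0 := by
  ext h k
  rw [fund_eq_stk]
  fin_cases k <;>
  simp [stk, Matrix.det_succ_row_zero, Fin.sum_univ_succ, Fin.succAbove]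

theorem dfund_nf {K : Type*} [CommRing K] (p q u v : Fin 4 → K) :
    dfund (nP p) (nQ q) (Matrix.of ![0, 0, u]) (Matrix.of ![0, 0, v]) =
      (fund (nP (p + u)) (nQ q) - fund (nP p) (nQ q)) +
        (fund (nP p) (nQ (q + v)) - fund (nP p) (nQ q)) := by
  unfold dfund
  have h1 : nP p + Matrix.of ![0, 0, u] = nP (p + u) := by
    ext i j; fin_cases i <;> simp [nP]
  have h2 : nQ q + Matrix.of ![0, 0, v] = nQ (q + v) := by
    ext i j; fin_cases i <;> simp [nQ]
  rw [h1, h2, fund_row2, fund_swap (Matrix.of ![0, 0, v]) (nP p), fund_row2]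
  simp

theorem rank_three_iff (P : Matrix (Fin 3) (Fin 4) ℂ) :
    P.rank = 3 ↔ ∀ v : Fin 3 → ℂ, v ᵥ* P = 0 → v = 0 := by
  rw [Matrix.rank_eq_finrank_span_row]
  have h := linearIndependent_iff_card_eq_finrank_span (R := ℂ) (b := P.row)
  rw [Fintype.card_fin] at h
  have h2 : LinearIndependent ℂ P.row ↔ ∀ v : Fin 3 → ℂ, v ᵥ* P = 0 → v = 0 := by
    rw [← Matrix.vecMul_injective_iff]
    constructor
    · intro hi v hv
      exact hi (by simpa using hv)
    · intro hi v w hvw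
      have := hi (v - w) (by rw [Matrix.sub_vecMul]; simpa [sub_eq_zero] using hvw)
      exact sub_eq_zero.1 this
  rw [← h2, h]
  exact eq_comm

theorem rank_mul_unit (P : Matrix (Fin 3) (Fin 4) ℂ) (H : Matrix (Fin 4) (Fin 4) ℂ)
    (hH : IsUnit H) : (P * H).rank = P.rank :=
  Matrix.rank_mul_eq_left_of_isUnit_det H P ((Matrix.isUnit_iff_isUnit_det H).1 hH)

theorem rank_smul_three (P : Matrix (Fin 3) (Fin 4) ℂ) (a : ℂ) (ha : a ≠ 0) (h : P.rank = 3) :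
    (a • P).rank = 3 := by
  rw [rank_three_iff] at *
  intro v hv
  apply h
  rw [Matrix.vecMul_smul] at hv
  exact (smul_eq_zero.1 hv).resolve_left ha

theorem exists_nf (P Q : Matrix (Fin 3) (Fin 4) ℂ) (hP : P.rank = 3) (hQ : Q.rank = 3)
    (h : fund P Q 2 2 ≠ 0) :
    ∃ (B : Matrix (Fin 4) (Fin 4) ℂ) (p q : Fin 4 → ℂ), B.det ≠ 0 ∧ P = nP p * B ∧ Q = nQ q * B ∧
      (p 2 ≠ 0 ∨ p 3 ≠ 0) ∧ (q 0 ≠ 0 ∨ q 1 ≠ 0) := by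
  rw [fund_eq_stk] at h
  have hB : (stk P Q 2 2).det ≠ 0 := fun h' => h (by rw [h', mul_zero])
  set B := stk P Q 2 2 with hBdef
  have hu : IsUnit B.det := isUnit_iff_ne_zero.2 hB
  have hPe : P = nP (P 2 ᵥ* B⁻¹) * B := by
    ext i j
    have h2 : P 2 ᵥ* B⁻¹ ᵥ* B = P 2 := by
      rw [Matrix.vecMul_vecMul, Matrix.nonsing_inv_mul _ hu, Matrix.vecMul_one]
    fin_cases i
    · simp [nP, Matrix.mul_apply, Fin.sum_univ_succ, hBdef, stk, Fin.succAbove]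
    · simp [nP, Matrix.mul_apply, Fin.sum_univ_succ, hBdef, stk, Fin.succAbove]
    · exact (congrFun h2 j).symm
  have hQe : Q = nQ (Q 2 ᵥ* B⁻¹) * B := by
    ext i j
    have h2 : Q 2 ᵥ* B⁻¹ ᵥ* B = Q 2 := by
      rw [Matrix.vecMul_vecMul, Matrix.nonsing_inv_mul _ hu, Matrix.vecMul_one]
    fin_cases i
    · simp [nQ, Matrix.mul_apply, Fin.sum_univ_succ, hBdef, stk, Fin.succAbove]
    · simp [nQ, Matrix.mul_apply, Fin.sum_univ_succ, hBdef, stk, Fin.succAbove]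
    · exact (congrFun h2 j).symm
  clear_value B
  refine ⟨B, _, _, hB, hPe, hQe, ?_, ?_⟩
  · by_contra! hc
    set p := P 2 ᵥ* B⁻¹
    rw [rank_three_iff] at hP
    have := hP ![p 0, p 1, -1] (by
      rw [hPe, ← Matrix.vecMul_vecMul]
      have : ![p 0, p 1, -1] ᵥ* nP p = 0 := by
        ext j
        fin_cases j <;> simp [Matrix.vecMul, dotProduct, Fin.sum_univ_succ, nP, hc.1, hc.2]
      rw [this, Matrix.zero_vecMul])
    simpa using congrFun this 2
  · by_contra! hc
    set q := Q 2 ᵥ* B⁻¹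
    rw [rank_three_iff] at hQ
    have := hQ ![q 2, q 3, -1] (by
      rw [hQe, ← Matrix.vecMul_vecMul]
      have : ![q 2, q 3, -1] ᵥ* nQ q = 0 := by
        ext j
        fin_cases j <;> simp [Matrix.vecMul, dotProduct, Fin.sum_univ_succ, nQ, hc.1, hc.2]
      rw [this, Matrix.zero_vecMul])
    simpa using congrFun this 2

/-- Rank-one factorisation uniqueness. -/
theorem ratio_aux (a b x y a' b' x' y' : ℂ) (h1 : a ≠ 0 ∨ b ≠ 0) (h2 : x ≠ 0 ∨ y ≠ 0)
    (e1 : a' * x' = a * x) (e2 : a' * y' = a * y) (e3 : b' * x' = b * x) (e4 : b' * y' = b * y) :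
    ∃ s : ℂ, s ≠ 0 ∧ a' = s * a ∧ b' = s * b ∧ x = s * x' ∧ y = s * y' := by
  rcases h2 with hx | hy
  · have hx' : x' ≠ 0 := by
      rintro rfl
      rcases h1 with h | h
      · exact mul_ne_zero h hx (by rw [← e1, mul_zero])
      · exact mul_ne_zero h hx (by rw [← e3, mul_zero])
    have ea : a' = x / x' * a := by field_simp; linear_combination e1
    have eb : b' = x / x' * b := by field_simp; linear_combination e3
    refine ⟨x / x', div_ne_zero hx hx', ea, eb, by field_simp, ?_⟩
    rw [ea] at e2; rw [eb] at e4
    rcases h1 with h | h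
    · apply mul_left_cancel₀ h; linear_combination -e2
    · apply mul_left_cancel₀ h; linear_combination -e4
  · have hy' : y' ≠ 0 := by
      rintro rfl
      rcases h1 with h | h
      · exact mul_ne_zero h hy (by rw [← e2, mul_zero])
      · exact mul_ne_zero h hy (by rw [← e4, mul_zero])
    have ea : a' = y / y' * a := by field_simp; linear_combination e2
    have eb : b' = y / y' * b := by field_simp; linear_combination e4
    refine ⟨y / y', div_ne_zero hy hy', ea, eb, ?_, by field_simp⟩
    rw [ea] at e1; rw [eb] at e3
    rcases h1 with h | h
    · apply mul_left_cancel₀ h; linear_combination -e1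
    · apply mul_left_cancel₀ h; linear_combination -e3

theorem global_gauge (P Q P' Q' : Matrix (Fin 3) (Fin 4) ℂ) (hP : P.rank = 3) (hQ : Q.rank = 3)
    (hP' : P'.rank = 3) (hQ' : Q'.rank = 3) (h : fund P Q 2 2 ≠ 0) (μ : ℂ) (hμ : μ ≠ 0)
    (he : fund P' Q' = μ • fund P Q) :
    ∃ H : Matrix (Fin 4) (Fin 4) ℂ, IsUnit H ∧ ∃ s : ℂ, s ≠ 0 ∧ P' * H = s • P ∧ Q' * H = Q := by
  have h' : fund P' Q' 2 2 ≠ 0 := by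
    rw [he, Matrix.smul_apply, smul_eq_mul]; exact mul_ne_zero hμ h
  obtain ⟨B, p, q, hB, rfl, rfl, hp, hq⟩ := exists_nf P Q hP hQ h
  obtain ⟨B', p', q', hB', rfl, rfl, hp', hq'⟩ := exists_nf P' Q' hP' hQ' h'
  rw [fund_mul, fund_mul, fund_nf, fund_nf, smul_smul] at he
  have e := fun i j => congrFun (congrFun he i) j
  have e22 := e 2 2
  simp at e22
  rw [← e22] at e
  have e' : ∀ i j, !![p' 0 * q' 2 - p' 2 * q' 0, p' 1 * q' 2 - p' 2 * q' 1, -q' 2;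
       p' 0 * q' 3 - p' 3 * q' 0, p' 1 * q' 3 - p' 3 * q' 1, -q' 3;
       -p' 0, -p' 1, 1] i j = !![p 0 * q 2 - p 2 * q 0, p 1 * q 2 - p 2 * q 1, -q 2;
       p 0 * q 3 - p 3 * q 0, p 1 * q 3 - p 3 * q 1, -q 3;
       -p 0, -p 1, 1] i j := by
    intro i j
    have := e i j
    rw [Matrix.smul_apply, Matrix.smul_apply, smul_eq_mul, smul_eq_mul] at this
    exact mul_left_cancel₀ hB' this
  have a00 := e' 0 0
  have a01 := e' 0 1
  have a02 := e' 0 2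
  have a10 := e' 1 0
  have a11 := e' 1 1
  have a12 := e' 1 2
  have a20 := e' 2 0
  have a21 := e' 2 1
  simp at a00 a01 a02 a10 a11 a12 a20 a21
  rw [a02, a20] at a00
  rw [a02, a21] at a01
  rw [a12, a20] at a10
  rw [a12, a21] at a11
  obtain ⟨s, hs, s1, s2, s3, s4⟩ := ratio_aux (p 2) (p 3) (q 0) (q 1) (p' 2) (p' 3) (q' 0) (q' 1)
    hp hq (by linear_combination -a00) (by linear_combination -a01) (by linear_combination -a10)
    (by linear_combination -a11)
  have hu' : IsUnit B'.det := isUnit_iff_ne_zero.2 hB'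
  have hu : IsUnit B.det := isUnit_iff_ne_zero.2 hB
  let D : Matrix (Fin 4) (Fin 4) ℂ := Matrix.diagonal ![s, s, 1, 1]
  have hD : D.det ≠ 0 := by simp [D, Matrix.det_diagonal, Fin.prod_univ_succ, hs]
  refine ⟨B'⁻¹ * D * B, ?_, s, hs, ?_, ?_⟩
  · rw [Matrix.isUnit_iff_isUnit_det, Matrix.det_mul, Matrix.det_mul]
    refine (IsUnit.mul ?_ (isUnit_iff_ne_zero.2 hD)).mul hu
    exact (Matrix.isUnit_nonsing_inv_det B' hu')
  · have : nP p' * D = s • nP p := by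
      ext i j
      rw [Matrix.mul_diagonal]
      fin_cases i <;> fin_cases j <;> simp [nP, a20, a21, s1, s2, mul_comm]
    rw [← Matrix.smul_mul, ← this]
    simp only [Matrix.mul_assoc, Matrix.mul_nonsing_inv_cancel_left _ _ hu']
  · have : nQ q' * D = nQ q := by
      ext i j
      rw [Matrix.mul_diagonal]
      fin_cases i <;> fin_cases j <;> simp [nQ, a02, a12, s3, s4, mul_comm]
    rw [← this]
    simp only [Matrix.mul_assoc, Matrix.mul_nonsing_inv_cancel_left _ _ hu']

theorem ratio_aux_inf (a b x y a' b' x' y' : ℂ) (h1 : a ≠ 0 ∨ b ≠ 0) (h2 : x ≠ 0 ∨ y ≠ 0)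
    (e1 : a' * x + a * x' = 0) (e2 : a' * y + a * y' = 0) (e3 : b' * x + b * x' = 0)
    (e4 : b' * y + b * y' = 0) :
    ∃ s : ℂ, a' = s * a ∧ b' = s * b ∧ x' = - s * x ∧ y' = - s * y := by
  rcases h2 with hx | hy
  · have ea : a' = (-x' / x) * a := by field_simp; linear_combination e1
    have eb : b' = (-x' / x) * b := by field_simp; linear_combination e3
    refine ⟨-x' / x, ea, eb, by field_simp, ?_⟩
    rw [ea] at e2; rw [eb] at e4
    rcases h1 with h | h
    · apply mul_left_cancel₀ h; linear_combination e2
    · apply mul_left_cancel₀ h; linear_combination e4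
  · have ea : a' = (-y' / y) * a := by field_simp; linear_combination e2
    have eb : b' = (-y' / y) * b := by field_simp; linear_combination e4
    refine ⟨-y' / y, ea, eb, ?_, by field_simp⟩
    rw [ea] at e1; rw [eb] at e3
    rcases h1 with h | h
    · apply mul_left_cancel₀ h; linear_combination e1
    · apply mul_left_cancel₀ h; linear_combination e3

theorem inf_gauge_nf (p q u v : Fin 4 → ℂ) (hp : p 2 ≠ 0 ∨ p 3 ≠ 0) (hq : q 0 ≠ 0 ∨ q 1 ≠ 0)
    (c : ℂ) (he : dfund (nP p) (nQ q) (Matrix.of ![0, 0, u]) (Matrix.of ![0, 0, v]) =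
      c • fund (nP p) (nQ q)) :
    ∃ (A : Matrix (Fin 4) (Fin 4) ℂ) (b : ℂ), Matrix.of ![0, 0, u] = nP p * A ∧
      Matrix.of ![0, 0, v] = nQ q * A + b • nQ q := by
  rw [dfund_nf] at he
  simp only [fund_nf] at he
  have e := fun i j => congrFun (congrFun he i) j
  have a00 := e 0 0
  have a01 := e 0 1
  have a02 := e 0 2
  have a10 := e 1 0
  have a11 := e 1 1
  have a12 := e 1 2
  have a20 := e 2 0
  have a21 := e 2 1
  have a22 := e 2 2
  simp at a22
  subst a22
  simp at a00 a01 a02 a10 a11 a12 a20 a21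
  obtain ⟨s, s1, s2, s3, s4⟩ := ratio_aux_inf (p 2) (p 3) (q 0) (q 1) (u 2) (u 3) (v 0) (v 1)
    hp hq (by rw [a20, a02] at a00; linear_combination -a00)
      (by rw [a21, a02] at a01; linear_combination -a01)
      (by rw [a20, a12] at a10; linear_combination -a10)
      (by rw [a21, a12] at a11; linear_combination -a11)
  refine ⟨Matrix.diagonal ![0, 0, s, s], -s, ?_, ?_⟩
  · ext i j
    rw [Matrix.mul_diagonal]
    fin_cases i <;> fin_cases j <;> simp [nP, a20, a21, s1, s2, mul_comm]
  · ext i j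
    rw [Matrix.add_apply, Matrix.mul_diagonal]
    fin_cases i <;> fin_cases j <;> simp [nQ, a02, a12, s3, s4, mul_comm]

theorem inf_gauge (P Q X Y : Matrix (Fin 3) (Fin 4) ℂ) (hP : P.rank = 3) (hQ : Q.rank = 3)
    (h : fund P Q 2 2 ≠ 0) (c : ℂ) (he : dfund P Q X Y = c • fund P Q) :
    ∃ (A : Matrix (Fin 4) (Fin 4) ℂ) (b : ℂ), X = P * A ∧ Y = Q * A + b • Q := by
  obtain ⟨B, p, q, hB, rfl, rfl, hp, hq⟩ := exists_nf P Q hP hQ h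
  have hu : IsUnit B.det := isUnit_iff_ne_zero.2 hB
  obtain ⟨X', rfl⟩ : ∃ X', X = X' * B := ⟨X * B⁻¹, by
    rw [Matrix.mul_assoc, Matrix.nonsing_inv_mul _ hu, Matrix.mul_one]⟩
  obtain ⟨Y', rfl⟩ : ∃ Y', Y = Y' * B := ⟨Y * B⁻¹, by
    rw [Matrix.mul_assoc, Matrix.nonsing_inv_mul _ hu, Matrix.mul_one]⟩
  rw [dfund_mul, fund_mul, smul_comm c] at he
  have he2 : dfund (nP p) (nQ q) X' Y' = c • fund (nP p) (nQ q) :=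
    smul_right_injective _ hB he
  let A0 : Matrix (Fin 4) (Fin 4) ℂ := Matrix.of ![X' 0, X' 1, Y' 0, Y' 1]
  obtain ⟨u, hu0⟩ : ∃ u, X' = nP p * A0 + Matrix.of ![0, 0, u] := by
    refine ⟨X' 2 - (nP p * A0) 2, ?_⟩
    ext i j
    fin_cases i
    · simp [nP, A0, Matrix.mul_apply, Fin.sum_univ_succ]
    · simp [nP, A0, Matrix.mul_apply, Fin.sum_univ_succ]
    · simp
  obtain ⟨v, hv0⟩ : ∃ v, Y' = nQ q * A0 + Matrix.of ![0, 0, v] := by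
    refine ⟨Y' 2 - (nQ q * A0) 2, ?_⟩
    ext i j
    fin_cases i
    · simp [nQ, A0, Matrix.mul_apply, Fin.sum_univ_succ]
    · simp [nQ, A0, Matrix.mul_apply, Fin.sum_univ_succ]
    · simp
  clear_value A0
  rw [hu0, hv0, dfund_add, dfund_inf] at he2
  obtain ⟨A1, b, h1, h2⟩ := inf_gauge_nf p q u v hp hq (c - A0.trace) (by
    rw [sub_smul, ← he2]; abel)
  refine ⟨B⁻¹ * (A0 + A1) * B, b, ?_, ?_⟩
  · rw [hu0, h1]
    simp only [Matrix.mul_assoc, Matrix.mul_nonsing_inv_cancel_left _ _ hu]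
    rw [← Matrix.mul_assoc, Matrix.mul_add]
  · rw [hv0, h2]
    simp only [Matrix.mul_assoc, Matrix.mul_nonsing_inv_cancel_left _ _ hu]
    rw [← Matrix.mul_assoc (nQ q), Matrix.mul_add, ← Matrix.smul_mul, ← Matrix.add_mul, add_assoc]

theorem stab (P Q : Matrix (Fin 3) (Fin 4) ℂ) (hP : P.rank = 3) (hQ : Q.rank = 3)
    (h : fund P Q 2 2 ≠ 0) (A : Matrix (Fin 4) (Fin 4) ℂ) (a b : ℂ) (h1 : P * A = a • P)
    (h2 : Q * A = b • Q) : a = b ∧ A = a • 1 := by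
  obtain ⟨B, p, q, hB, rfl, rfl, hp, hq⟩ := exists_nf P Q hP hQ h
  have hu : IsUnit B.det := isUnit_iff_ne_zero.2 hB
  set C := B * A * B⁻¹ with hC
  have hA : A = B⁻¹ * C * B := by
    rw [hC]
    simp only [Matrix.mul_assoc, Matrix.nonsing_inv_mul _ hu, Matrix.mul_one]
    simp only [← Matrix.mul_assoc, Matrix.nonsing_inv_mul _ hu, Matrix.one_mul]
  clear_value C
  subst hA
  have k1 : nP p * C = a • nP p := by
    have := congrArg (· * B⁻¹) h1
    simp only [Matrix.mul_assoc, Matrix.mul_nonsing_inv_cancel_left _ _ hu, Matrix.smul_mul,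
      Matrix.mul_nonsing_inv _ hu, Matrix.mul_one] at this
    exact this
  have k2 : nQ q * C = b • nQ q := by
    have := congrArg (· * B⁻¹) h2
    simp only [Matrix.mul_assoc, Matrix.mul_nonsing_inv_cancel_left _ _ hu, Matrix.smul_mul,
      Matrix.mul_nonsing_inv _ hu, Matrix.mul_one] at this
    exact this
  have hCd : C = Matrix.diagonal ![a, a, b, b] := by
    ext i j
    fin_cases i
    · have := congrFun (congrFun k1 0) j
      simp [nP, Matrix.mul_apply, Fin.sum_univ_succ] at this
      fin_cases j <;> simpa using this
    · have := congrFun (congrFun k1 1) j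
      simp [nP, Matrix.mul_apply, Fin.sum_univ_succ] at this
      fin_cases j <;> simpa using this
    · have := congrFun (congrFun k2 0) j
      simp [nQ, Matrix.mul_apply, Fin.sum_univ_succ] at this
      fin_cases j <;> simpa using this
    · have := congrFun (congrFun k2 1) j
      simp [nQ, Matrix.mul_apply, Fin.sum_univ_succ] at this
      fin_cases j <;> simpa using this
  have hab : a = b := by
    rw [hCd] at k1
    have w := fun j => congrFun (congrFun k1 2) j
    simp only [Matrix.mul_diagonal, Matrix.smul_apply, smul_eq_mul] at w
    rcases hp with hp | hp
    · have := w 2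
      simp [nP] at this
      have h3 : (a - b) * p 2 = 0 := by linear_combination -this
      exact sub_eq_zero.1 ((mul_eq_zero.1 h3).resolve_right hp)
    · have := w 3
      simp [nP] at this
      have h3 : (a - b) * p 3 = 0 := by linear_combination -this
      exact sub_eq_zero.1 ((mul_eq_zero.1 h3).resolve_right hp)
  refine ⟨hab, ?_⟩
  subst hab
  have : C = a • 1 := by
    rw [hCd]; ext i j; fin_cases i <;> fin_cases j <;> simp
  rw [this]
  simp [Matrix.nonsing_inv_mul _ hu]

/-- Matrix of variables. -/
noncomputable def varMat (n : ℕ) (i : Fin n) :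
    Matrix (Fin 3) (Fin 4) (MvPolynomial (Fin n × Fin 3 × Fin 4) ℂ) :=
  Matrix.of fun a b => MvPolynomial.X (i, a, b)

/-- coordinates of a configuration -/
def coords {n : ℕ} (P : Config n) : Fin n × Fin 3 × Fin 4 → ℂ := fun v => P v.1 v.2.1 v.2.2

theorem varMat_map {n : ℕ} (P : Config n) (i : Fin n) :
    (varMat n i).map (MvPolynomial.eval (coords P)) = P i := by
  ext a b
  simp [varMat, coords]

theorem eval_fund_varMat {n : ℕ} (P : Config n) (i j : Fin n) (h k : Fin 3) :
    MvPolynomial.eval (coords P) (fund (varMat n i) (varMat n j) h k) =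
      fund (P i) (P j) h k := by
  rw [← fund_map, varMat_map, varMat_map]

theorem differentiable_coords {n : ℕ} : Differentiable ℂ (coords (n := n)) := by
  refine (differentiable_pi (𝕜 := ℂ) (E := Config n) (F' := fun _ => ℂ)).2 ?_
  intro v
  let L : Config n →ₗ[ℂ] ℂ :=
    { toFun := fun P => P v.1 v.2.1 v.2.2
      map_add' := fun _ _ => rfl
      map_smul' := fun _ _ => rfl }
  exact (LinearMap.toContinuousLinearMap L).differentiable

theorem differentiable_fund {n : ℕ} (i j : Fin n) (h k : Fin 3) :
    Differentiable ℂ (fun P : Config n => fund (P i) (P j) h k) := by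
  have h1 := ((contDiff_eval (fund (varMat n i) (varMat n j) h k)
    (m := 1)).differentiable one_ne_zero).comp differentiable_coords
  have h2 : (fun P : Config n => fund (P i) (P j) h k) =
      (fun x => MvPolynomial.eval x (fund (varMat n i) (varMat n j) h k)) ∘ coords := by
    funext P
    exact (eval_fund_varMat P i j h k).symm
  rw [h2]
  exact h1

theorem differentiableAt_Faff {n : ℕ} (G : SimpleGraph (Fin n)) (P : Config n)
    (hP : P ∈ chartDomain G) : DifferentiableAt ℂ (Faff G) P := by
  refine (differentiableAt_pi (𝕜 := ℂ) (E := Config n)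
    (F' := fun _ : EdgeIdx G => Matrix (Fin 3) (Fin 3) ℂ)).2 ?_
  intro e
  refine (differentiableAt_pi (𝕜 := ℂ) (E := Config n)
    (F' := fun _ : Fin 3 => Fin 3 → ℂ)).2 ?_
  intro h
  refine (differentiableAt_pi (𝕜 := ℂ) (E := Config n)
    (F' := fun _ : Fin 3 => ℂ)).2 ?_
  intro k
  exact (((differentiable_fund e.1.1 e.1.2 2 2) P).inv (hP.2.2 _ _ e.2.1)).mul
    ((differentiable_fund e.1.1 e.1.2 h k) P)

/-- infinitesimal solutions -/
def Kset {n : ℕ} (G : SimpleGraph (Fin n)) (P H : Config n) : Prop :=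
  ∀ i j, G.Adj i j → ∃ c : ℂ, dfund (P i) (P j) (H i) (H j) = c • fund (P i) (P j)

theorem fderiv_Faff_apply {n : ℕ} (G : SimpleGraph (Fin n)) (P H : Config n)
    (hP : P ∈ chartDomain G) (e : EdgeIdx G) (h k : Fin 3) :
    fderiv ℂ (Faff G) P H e h k =
      -dfund (P e.1.1) (P e.1.2) (H e.1.1) (H e.1.2) 2 2 / fund (P e.1.1) (P e.1.2) 2 2 ^ 2 *
        fund (P e.1.1) (P e.1.2) h k + (fund (P e.1.1) (P e.1.2) 2 2)⁻¹ *
        dfund (P e.1.1) (P e.1.2) (H e.1.1) (H e.1.2) h k := by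
  haveI : Fintype (EdgeIdx G) := Fintype.ofFinite _
  have h1 := HasFDerivAt.hasLineDerivAt (E := Config n) (F := EdgeIdx G → Matrix (Fin 3) (Fin 3) ℂ)
    (differentiableAt_Faff G P hP).hasFDerivAt H
  have h2 : HasDerivAt (fun t : ℂ => Faff G (P + t • H)) (fderiv ℂ (Faff G) P H) 0 := h1
  have h3 := (hasDerivAt_pi (𝕜 := ℂ) (E' := fun _ : EdgeIdx G => Matrix (Fin 3) (Fin 3) ℂ)).1 h2 e
  have h4 := (hasDerivAt_pi (𝕜 := ℂ) (E' := fun _ : Fin 3 => Fin 3 → ℂ)).1 h3 h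
  have h5 := (hasDerivAt_pi (𝕜 := ℂ) (E' := fun _ : Fin 3 => ℂ)).1 h4 k
  have d22 := hasDerivAt_fund (P e.1.1) (P e.1.2) (H e.1.1) (H e.1.2) 2 2
  have dhk := hasDerivAt_fund (P e.1.1) (P e.1.2) (H e.1.1) (H e.1.2) h k
  have h6 := (d22.fun_inv (by simpa using hP.2.2 _ _ e.2.1)).fun_mul dhk
  have h7 := HasDerivAt.unique h5 h6
  rw [h7]
  simp

theorem fderiv_Faff_eq_zero_iff {n : ℕ} (G : SimpleGraph (Fin n)) (P H : Config n)
    (hP : P ∈ chartDomain G) : fderiv ℂ (Faff G) P H = 0 ↔ Kset G P H := by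
  constructor
  · intro h
    have key : ∀ i j, G.Adj i j → i < j →
        ∃ c : ℂ, dfund (P i) (P j) (H i) (H j) = c • fund (P i) (P j) := by
      intro i j hij hlt
      refine ⟨dfund (P i) (P j) (H i) (H j) 2 2 / fund (P i) (P j) 2 2, ?_⟩
      ext a b
      have h1 := fderiv_Faff_apply G P H hP ⟨(i, j), hij, hlt⟩ a b
      rw [h] at h1
      have h22 := hP.2.2 _ _ hij
      simp only [Pi.zero_apply] at h1
      change (0 : ℂ) = _ at h1
      simp only [Matrix.smul_apply, smul_eq_mul]
      field_simp at h1 ⊢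
      linear_combination -h1
    intro i j hij
    rcases lt_trichotomy i j with hlt | rfl | hlt
    · exact key i j hij hlt
    · exact absurd hij (G.loopless.irrefl i)
    · obtain ⟨c, hc⟩ := key j i hij.symm hlt
      exact ⟨c, by rw [dfund_swap, fund_swap (P j), hc, Matrix.transpose_smul]⟩
  · intro h
    ext e a b
    rw [fderiv_Faff_apply G P H hP e]
    obtain ⟨c, hc⟩ := h _ _ e.2.1
    have h22 := hP.2.2 _ _ e.2.1
    rw [hc]
    simp only [Matrix.smul_apply, smul_eq_mul, Pi.zero_apply]
    change _ = (0 : ℂ)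
    field_simp
    ring

theorem Kset_add {n : ℕ} (G : SimpleGraph (Fin n)) (P H H' : Config n)
    (h : Kset G P H) (h' : Kset G P H') : Kset G P (H + H') := by
  intro i j hij
  obtain ⟨c, hc⟩ := h i j hij
  obtain ⟨c', hc'⟩ := h' i j hij
  exact ⟨c + c', by rw [Pi.add_apply, Pi.add_apply, dfund_add, hc, hc', add_smul]⟩

theorem Kset_gauge {n : ℕ} (G : SimpleGraph (Fin n)) (P : Config n)
    (A : Matrix (Fin 4) (Fin 4) ℂ) (c : Fin n → ℂ) :
    Kset G P (fun i => P i * A + c i • P i) := by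
  intro i j hij
  exact ⟨_, dfund_gauge _ _ _ _ _⟩

def Cond {n : ℕ} (G : SimpleGraph (Fin n)) (a b : Fin n) (P : Config n) : Prop :=
  ∀ H, Kset G P H → H a = 0 → H b = 0 → ∀ i, ∃ c : ℂ, H i = c • P i

theorem Cond_scale {n : ℕ} (G : SimpleGraph (Fin n)) (a b : Fin n) (P : Config n)
    (l : Fin n → ℂ) (hl : ∀ i, l i ≠ 0) (h : Cond G a b P) :
    Cond G a b (fun i => l i • P i) := by
  intro H hH ha hb i
  have := h (fun i => (l i)⁻¹ • H i) ?_ (by simp [ha]) (by simp [hb]) i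
  · obtain ⟨c, hc⟩ := this
    refine ⟨c, ?_⟩
    have h2 := congrArg (l i • ·) hc
    simp only [smul_smul, mul_inv_cancel₀ (hl i), one_smul] at h2
    rw [h2, smul_smul, mul_comm]
  · intro i j hij
    obtain ⟨c, hc⟩ := hH i j hij
    have e1 := dfund_scale (P i) (P j) ((l i)⁻¹ • H i) ((l j)⁻¹ • H j) (l i) (l j)
    simp only [smul_smul, mul_inv_cancel₀ (hl _), one_smul] at e1
    refine ⟨c, ?_⟩
    have h3 : l i ^ 2 * l j ^ 2 ≠ 0 := mul_ne_zero (pow_ne_zero _ (hl i)) (pow_ne_zero _ (hl j))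
    apply smul_right_injective _ h3
    simp only
    rw [← e1, hc, fund_smul, smul_comm]

theorem finrank_chartDirections (n : ℕ) : Module.finrank ℂ (chartDirections n) = 11 * n := by
  let L : Config n →ₗ[ℂ] (Fin n → ℂ) :=
    { toFun := fun P i => P i 2 3
      map_add' := fun _ _ => rfl
      map_smul' := fun _ _ => rfl }
  have hk : LinearMap.ker L = chartDirections n := by
    ext H
    rw [LinearMap.mem_ker]
    exact funext_iff
  have hs : Function.Surjective L := by
    intro y
    refine ⟨fun i => Matrix.of fun _ _ => y i, ?_⟩
    rfl
  have h1 := LinearMap.finrank_range_add_finrank_ker L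
  rw [LinearMap.range_eq_top.2 hs, finrank_top, hk] at h1
  simp [Module.finrank_pi_fintype, Module.finrank_matrix] at h1
  omega

theorem rank_iff_ker {n : ℕ} (hn : 2 ≤ n) (G : SimpleGraph (Fin n)) (P : Config n) :
    LinearMap.rank ((fderiv ℂ (Faff G) P).toLinearMap ∘ₗ (chartDirections n).subtype) =
      (11 * n - 15 : ℕ) ↔ Module.finrank ℂ (LinearMap.ker
        ((fderiv ℂ (Faff G) P).toLinearMap ∘ₗ (chartDirections n).subtype)) = 15 := by
  have h1 := LinearMap.finrank_range_add_finrank_ker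
    ((fderiv ℂ (Faff G) P).toLinearMap ∘ₗ (chartDirections n).subtype)
  rw [finrank_chartDirections] at h1
  unfold LinearMap.rank
  rw [← Module.finrank_eq_rank, Nat.cast_inj]
  omega

/-- the gauge map -/
noncomputable def gam {n : ℕ} (P : Config n) : Matrix (Fin 4) (Fin 4) ℂ →ₗ[ℂ] Config n where
  toFun A := fun i => P i * A + (-(P i * A) 2 3) • P i
  map_add' A B := by
    funext i
    simp only [Matrix.mul_add, Matrix.add_apply, Pi.add_apply]
    module
  map_smul' r A := by
    funext i
    simp only [Matrix.mul_smul, Matrix.smul_apply, Pi.smul_apply, RingHom.id_apply, smul_eq_mul]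
    module

theorem gam_mem {n : ℕ} (G : SimpleGraph (Fin n)) (P : Config n) (hP : P ∈ chartDomain G)
    (A : Matrix (Fin 4) (Fin 4) ℂ) : gam P A ∈ chartDirections n := by
  intro i
  simp [gam, hP.1 i]

theorem surj_aux {V W : Type*} [AddCommGroup V] [Module ℂ V] [AddCommGroup W] [Module ℂ W]
    [FiniteDimensional ℂ V] [FiniteDimensional ℂ W] (γ : V →ₗ[ℂ] W) (v : V) (hv : v ≠ 0)
    (hker : LinearMap.ker γ = ℂ ∙ v) (hV : Module.finrank ℂ V = 16) :
    Module.finrank ℂ W = 15 ↔ Function.Surjective γ := by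
  have hdim : Module.finrank ℂ (LinearMap.range γ) = 15 := by
    have h1 := LinearMap.finrank_range_add_finrank_ker γ
    rw [hker, finrank_span_singleton hv] at h1
    omega
  rw [← LinearMap.range_eq_top]
  constructor
  · intro h
    exact Submodule.eq_top_of_finrank_eq (by rw [hdim, h])
  · intro h
    rw [← hdim, h, finrank_top]

theorem rank_iff_Cond {n : ℕ} (hn : 2 ≤ n) (G : SimpleGraph (Fin n)) (P : Config n)
    (hP : P ∈ chartDomain G) (a b : Fin n) (hab : G.Adj a b) :
    LinearMap.rank ((fderiv ℂ (Faff G) P).toLinearMap ∘ₗ (chartDirections n).subtype) =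
      (11 * n - 15 : ℕ) ↔ Cond G a b P := by
  rw [rank_iff_ker hn]
  set L := (fderiv ℂ (Faff G) P).toLinearMap ∘ₗ (chartDirections n).subtype with hL
  have hmem : ∀ H : chartDirections n, H ∈ LinearMap.ker L ↔ Kset G P H.1 := by
    intro H
    rw [LinearMap.mem_ker, ← fderiv_Faff_eq_zero_iff G P _ hP]
    rfl
  let γ0 : Matrix (Fin 4) (Fin 4) ℂ →ₗ[ℂ] chartDirections n :=
    (gam P).codRestrict _ (gam_mem G P hP)
  let γ : Matrix (Fin 4) (Fin 4) ℂ →ₗ[ℂ] LinearMap.ker L :=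
    γ0.codRestrict _ (fun A => (hmem _).2 (Kset_gauge G P A _))
  have hγ : ∀ A i, (γ A).1.1 i = P i * A + (-(P i * A) 2 3) • P i := fun A i => rfl
  have hker : LinearMap.ker γ = ℂ ∙ (1 : Matrix (Fin 4) (Fin 4) ℂ) := by
    ext A
    rw [LinearMap.mem_ker, Submodule.mem_span_singleton]
    constructor
    · intro hA
      have h1 : ∀ i, P i * A = (P i * A) 2 3 • P i := by
        intro i
        have := hγ A i
        rw [hA] at this
        have h2 : P i * A + (-(P i * A) 2 3) • P i = 0 := this.symm
        rw [neg_smul, add_neg_eq_zero] at h2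
        exact h2
      exact ⟨_, (stab (P a) (P b) (hP.2.1 a) (hP.2.1 b) (hP.2.2 a b hab) A _ _ (h1 a) (h1 b)).2.symm⟩
    · rintro ⟨c, rfl⟩
      apply Subtype.ext
      apply Subtype.ext
      funext i
      rw [hγ]
      simp [hP.1 i]
  have hiff := surj_aux (V := Matrix (Fin 4) (Fin 4) ℂ) (W := LinearMap.ker L) γ 1 one_ne_zero hker
    (by simp [Module.finrank_matrix])
  rw [hiff]
  constructor
  · intro hs H hH ha hb i
    have hK : Kset G P (H + fun i => P i * (0 : Matrix (Fin 4) (Fin 4) ℂ) + (-(H i 2 3)) • P i) :=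
      Kset_add G P _ _ hH (Kset_gauge G P 0 _)
    have hD : (H + fun i => P i * (0 : Matrix (Fin 4) (Fin 4) ℂ) + (-(H i 2 3)) • P i) ∈ chartDirections n := by
      intro i
      simp [hP.1 i]
    obtain ⟨A, hA⟩ := hs ⟨⟨_, hD⟩, (hmem _).2 hK⟩
    have h1 : ∀ i, P i * A + (-(P i * A) 2 3) • P i = H i + (-(H i 2 3)) • P i := by
      intro i
      rw [← hγ, hA]
      simp
    have ea : P a * A = (P a * A) 2 3 • P a := by
      have := h1 a
      rw [ha] at this
      simpa [add_neg_eq_zero] using this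
    have eb : P b * A = (P b * A) 2 3 • P b := by
      have := h1 b
      rw [hb] at this
      simpa [add_neg_eq_zero] using this
    obtain ⟨-, hA1⟩ := stab (P a) (P b) (hP.2.1 a) (hP.2.1 b) (hP.2.2 a b hab) A _ _ ea eb
    refine ⟨H i 2 3, ?_⟩
    have h2 := h1 i
    rw [hA1] at h2
    simp [hP.1 i] at h2
    have h3 : H i + -(H i 2 3 • P i) = 0 := h2.symm
    rwa [add_neg_eq_zero] at h3
  · rintro hC ⟨⟨H, hD⟩, hH⟩
    rw [hmem] at hH
    simp only at hH
    obtain ⟨c, hc⟩ := hH a b hab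
    obtain ⟨A, β, eA, eB⟩ := inf_gauge _ _ _ _ (hP.2.1 a) (hP.2.1 b) (hP.2.2 a b hab) c hc
    have hK := Kset_add G P _ _ hH (Kset_gauge G P (-A) (fun i => if i = b then -β else 0))
    have hne : a ≠ b := G.ne_of_adj hab
    have hall := hC _ hK (by
      change H a + (P a * -A + (if a = b then -β else 0) • P a) = 0
      rw [if_neg hne, eA, Matrix.mul_neg]; module) (by
      change H b + (P b * -A + (if b = b then -β else 0) • P b) = 0
      rw [if_pos rfl, eB, Matrix.mul_neg]; module)
    refine ⟨A, ?_⟩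
    apply Subtype.ext
    apply Subtype.ext
    funext i
    rw [hγ]
    simp only
    obtain ⟨d, hd⟩ := hall i
    have h2 : ∃ d' : ℂ, H i = P i * A + d' • P i := by
      refine ⟨d - (if i = b then -β else 0), ?_⟩
      rw [sub_smul, ← hd, Pi.add_apply, Matrix.mul_neg]
      abel
    obtain ⟨d', hd'⟩ := h2
    have h3 := hD i
    rw [hd'] at h3
    simp [hP.1 i] at h3
    rw [hd', eq_neg_of_add_eq_zero_right h3]

/-- Variables: the entries and one scale per edge. -/
abbrev NuIdx {n : ℕ} (G : SimpleGraph (Fin n)) : Type := (Fin n × Fin 3 × Fin 4) ⊕ EdgeIdx G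

abbrev OutIdx {n : ℕ} (G : SimpleGraph (Fin n)) : Type :=
  (EdgeIdx G × Fin 3 × Fin 3) ⊕ ((Fin 3 × Fin 4) ⊕ ((Fin 3 × Fin 4) ⊕ Fin n))

noncomputable def vm {n : ℕ} (G : SimpleGraph (Fin n)) (i : Fin n) :
    Matrix (Fin 3) (Fin 4) (MvPolynomial (NuIdx G) ℂ) :=
  Matrix.of fun a b => MvPolynomial.X (Sum.inl (i, a, b))

noncomputable def PhiP {n : ℕ} (G : SimpleGraph (Fin n)) (a b : Fin n)
    (κ : Fin n → Fin 3 × Fin 4) : OutIdx G → MvPolynomial (NuIdx G) ℂ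
  | Sum.inl (e, h, k) => MvPolynomial.X (Sum.inr e) * fund (vm G e.1.1) (vm G e.1.2) h k
  | Sum.inr (Sum.inl rc) => MvPolynomial.X (Sum.inl (a, rc))
  | Sum.inr (Sum.inr (Sum.inl rc)) => MvPolynomial.X (Sum.inl (b, rc))
  | Sum.inr (Sum.inr (Sum.inr i)) => MvPolynomial.X (Sum.inl (i, κ i))

def pt {n : ℕ} {G : SimpleGraph (Fin n)} (P : Config n) (s : EdgeIdx G → ℂ) : NuIdx G → ℂ :=
  Sum.elim (coords P) s

theorem exists_pt {n : ℕ} {G : SimpleGraph (Fin n)} (x : NuIdx G → ℂ) : ∃ P s, x = pt P s := by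
  refine ⟨fun i => Matrix.of fun a b => x (Sum.inl (i, a, b)), fun e => x (Sum.inr e), ?_⟩
  funext v
  rcases v with v | e <;> rfl

theorem pt_injective {n : ℕ} {G : SimpleGraph (Fin n)} {P P' : Config n} {s s' : EdgeIdx G → ℂ}
    (h : pt P s = pt P' s') : P = P' ∧ s = s' := by
  constructor
  · funext i
    ext a b
    exact congrFun h (Sum.inl (i, a, b))
  · funext e
    exact congrFun h (Sum.inr e)

theorem vm_map {n : ℕ} (G : SimpleGraph (Fin n)) (P : Config n) (s : EdgeIdx G → ℂ) (i : Fin n) :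
    (vm G i).map (MvPolynomial.eval (pt P s)) = P i := by
  ext a b
  simp [vm, pt, coords]

theorem eval_fund_vm {n : ℕ} (G : SimpleGraph (Fin n)) (P : Config n) (s : EdgeIdx G → ℂ)
    (i j : Fin n) (h k : Fin 3) :
    MvPolynomial.eval (pt P s) (fund (vm G i) (vm G j) h k) = fund (P i) (P j) h k := by
  rw [← fund_map, vm_map, vm_map]

section
variable {n : ℕ} (G : SimpleGraph (Fin n)) (a b : Fin n) (κ : Fin n → Fin 3 × Fin 4)

theorem polyMap_PhiP_edge (P : Config n) (s : EdgeIdx G → ℂ) (e : EdgeIdx G) (h k : Fin 3) :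
    polyMap (PhiP G a b κ) (pt P s) (Sum.inl (e, h, k)) =
      s e * fund (P e.1.1) (P e.1.2) h k := by
  unfold polyMap PhiP
  simp only [map_mul, MvPolynomial.eval_X, eval_fund_vm]
  rfl

theorem polyMap_PhiP_a (P : Config n) (s : EdgeIdx G → ℂ) (rc) :
    polyMap (PhiP G a b κ) (pt P s) (Sum.inr (Sum.inl rc)) = P a rc.1 rc.2 := by
  unfold polyMap PhiP
  simp only [MvPolynomial.eval_X]
  rfl

theorem polyMap_PhiP_b (P : Config n) (s : EdgeIdx G → ℂ) (rc) :
    polyMap (PhiP G a b κ) (pt P s) (Sum.inr (Sum.inr (Sum.inl rc))) = P b rc.1 rc.2 := by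
  unfold polyMap PhiP
  simp only [MvPolynomial.eval_X]
  rfl

theorem polyMap_PhiP_i (P : Config n) (s : EdgeIdx G → ℂ) (i : Fin n) :
    polyMap (PhiP G a b κ) (pt P s) (Sum.inr (Sum.inr (Sum.inr i))) = P i (κ i).1 (κ i).2 := by
  unfold polyMap PhiP
  simp only [MvPolynomial.eval_X]
  rfl

theorem polyMap_PhiP_eq_iff (P P' : Config n) (s s' : EdgeIdx G → ℂ) :
    polyMap (PhiP G a b κ) (pt P s) = polyMap (PhiP G a b κ) (pt P' s') ↔
      (∀ e, s e • fund (P e.1.1) (P e.1.2) = s' e • fund (P' e.1.1) (P' e.1.2)) ∧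
      P a = P' a ∧ P b = P' b ∧ ∀ i, P i (κ i).1 (κ i).2 = P' i (κ i).1 (κ i).2 := by
  constructor
  · intro h
    refine ⟨fun e => ?_, ?_, ?_, fun i => ?_⟩
    · ext r c
      have := congrFun h (Sum.inl (e, r, c))
      rwa [polyMap_PhiP_edge, polyMap_PhiP_edge] at this
    · ext r c
      have := congrFun h (Sum.inr (Sum.inl (r, c)))
      rwa [polyMap_PhiP_a, polyMap_PhiP_a] at this
    · ext r c
      have := congrFun h (Sum.inr (Sum.inr (Sum.inl (r, c))))
      rwa [polyMap_PhiP_b, polyMap_PhiP_b] at this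
    · have := congrFun h (Sum.inr (Sum.inr (Sum.inr i)))
      rwa [polyMap_PhiP_i, polyMap_PhiP_i] at this
  · rintro ⟨h1, h2, h3, h4⟩
    funext o
    rcases o with ⟨e, r, c⟩ | rc | rc | i
    · rw [polyMap_PhiP_edge, polyMap_PhiP_edge]
      exact congrFun (congrFun (h1 e) r) c
    · rw [polyMap_PhiP_a, polyMap_PhiP_a, h2]
    · rw [polyMap_PhiP_b, polyMap_PhiP_b, h3]
    · rw [polyMap_PhiP_i, polyMap_PhiP_i, h4]

theorem Kset_of_edges (P H : Config n) (h : ∀ e : EdgeIdx G, ∃ c : ℂ,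
    dfund (P e.1.1) (P e.1.2) (H e.1.1) (H e.1.2) = c • fund (P e.1.1) (P e.1.2)) :
    Kset G P H := by
  intro i j hij
  rcases lt_trichotomy i j with hlt | rfl | hlt
  · exact h ⟨(i, j), hij, hlt⟩
  · exact absurd hij (G.loopless.irrefl i)
  · obtain ⟨c, hc⟩ := h ⟨(j, i), hij.symm, hlt⟩
    exact ⟨c, by rw [dfund_swap, fund_swap (P j), hc, Matrix.transpose_smul]⟩

variable [DecidableRel G.Adj]

theorem pt_line (P H : Config n) (s τ : EdgeIdx G → ℂ) (t : ℂ) :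
    pt P s + t • pt H τ = pt (P + t • H) (s + t • τ) := by
  funext v
  rcases v with v | e <;> rfl

theorem fderiv_PhiP (P H : Config n) (s τ : EdgeIdx G → ℂ) :
    fderiv ℂ (polyMap (PhiP G a b κ)) (pt P s) (pt H τ) = 0 ↔
      (∀ e : EdgeIdx G, s e • dfund (P e.1.1) (P e.1.2) (H e.1.1) (H e.1.2) +
        τ e • fund (P e.1.1) (P e.1.2) = 0) ∧ H a = 0 ∧ H b = 0 ∧
        ∀ i, H i (κ i).1 (κ i).2 = 0 := by
  have hd : DifferentiableAt ℂ (polyMap (PhiP G a b κ)) (pt P s) :=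
    ((contDiff_polyMap (PhiP G a b κ) (m := 1)).differentiable one_ne_zero) _
  have h1 := hd.hasFDerivAt.hasLineDerivAt (pt H τ)
  have h2 : HasDerivAt (fun t : ℂ => polyMap (PhiP G a b κ) (pt P s + t • pt H τ))
    (fderiv ℂ (polyMap (PhiP G a b κ)) (pt P s) (pt H τ)) 0 := h1
  simp only [pt_line] at h2
  set D := fderiv ℂ (polyMap (PhiP G a b κ)) (pt P s) (pt H τ) with hD
  clear_value D
  have h3 := (hasDerivAt_pi (𝕜 := ℂ) (E' := fun _ : OutIdx G => ℂ)).1 h2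
  have lin : ∀ x y : ℂ, HasDerivAt (fun t : ℂ => x + t * y) y 0 := fun x y => by
    simpa using ((hasDerivAt_id (0 : ℂ)).mul_const y).const_add x
  have e1 : ∀ e h k, D (Sum.inl (e, h, k)) = τ e * fund (P e.1.1) (P e.1.2) h k +
      s e * dfund (P e.1.1) (P e.1.2) (H e.1.1) (H e.1.2) h k := by
    intro e h k
    have h4 := h3 (Sum.inl (e, h, k))
    simp only [polyMap_PhiP_edge] at h4
    have h5 := (lin (s e) (τ e)).fun_mul
      (hasDerivAt_fund (P e.1.1) (P e.1.2) (H e.1.1) (H e.1.2) h k)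
    have h6 := HasDerivAt.unique h4 h5
    rw [h6]
    simp
  have e2 : ∀ rc, D (Sum.inr (Sum.inl rc)) = H a rc.1 rc.2 := by
    intro rc
    have h4 := h3 (Sum.inr (Sum.inl rc))
    simp only [polyMap_PhiP_a] at h4
    exact HasDerivAt.unique h4 (lin _ _)
  have e3 : ∀ rc, D (Sum.inr (Sum.inr (Sum.inl rc))) = H b rc.1 rc.2 := by
    intro rc
    have h4 := h3 (Sum.inr (Sum.inr (Sum.inl rc)))
    simp only [polyMap_PhiP_b] at h4
    exact HasDerivAt.unique h4 (lin _ _)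
  have e4 : ∀ i, D (Sum.inr (Sum.inr (Sum.inr i))) = H i (κ i).1 (κ i).2 := by
    intro i
    have h4 := h3 (Sum.inr (Sum.inr (Sum.inr i)))
    simp only [polyMap_PhiP_i] at h4
    exact HasDerivAt.unique h4 (lin _ _)
  constructor
  · intro h
    refine ⟨fun e => ?_, ?_, ?_, fun i => ?_⟩
    · ext r c
      have := e1 e r c
      rw [h] at this
      simp only [Matrix.add_apply, Matrix.smul_apply, smul_eq_mul, Matrix.zero_apply]
      simp only [Pi.zero_apply] at this
      rw [add_comm, ← this]
    · ext r c
      rw [← e2 (r, c), h]; rfl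
    · ext r c
      rw [← e3 (r, c), h]; rfl
    · rw [← e4 i, h]; rfl
  · rintro ⟨h1, h2, h3, h4⟩
    funext o
    rcases o with ⟨e, r, c⟩ | rc | rc | i
    · rw [e1, add_comm]
      exact congrFun (congrFun (h1 e) r) c
    · rw [e2, h2]; rfl
    · rw [e3, h3]; rfl
    · rw [e4, h4]; rfl

theorem inj_iff_PhiP (P : Config n) (s : EdgeIdx G → ℂ) :
    Function.Injective (fderiv ℂ (polyMap (PhiP G a b κ)) (pt P s)) ↔
      ∀ (H : Config n) (τ : EdgeIdx G → ℂ), (∀ e : EdgeIdx G,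
        s e • dfund (P e.1.1) (P e.1.2) (H e.1.1) (H e.1.2) +
        τ e • fund (P e.1.1) (P e.1.2) = 0) → H a = 0 → H b = 0 →
        (∀ i, H i (κ i).1 (κ i).2 = 0) → H = 0 ∧ τ = 0 := by
  rw [injective_iff_map_eq_zero]
  have h0 : pt (G := G) 0 0 = 0 := by
    funext v
    rcases v with v | e <;> rfl
  constructor
  · intro h H τ h1 h2 h3 h4
    have := h (pt H τ) ((fderiv_PhiP G a b κ P H s τ).2 ⟨h1, h2, h3, h4⟩)
    rw [← h0] at this
    exact pt_injective this
  · intro h x hx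
    obtain ⟨H, τ, rfl⟩ := exists_pt x
    obtain ⟨h1, h2, h3, h4⟩ := (fderiv_PhiP G a b κ P H s τ).1 hx
    obtain ⟨rfl, rfl⟩ := h H τ h1 h2 h3 h4
    exact h0

theorem inj_of_Cond (P : Config n) (s : EdgeIdx G → ℂ) (hs : ∀ e, s e ≠ 0)
    (hκ : ∀ i, P i (κ i).1 (κ i).2 ≠ 0)
    (hF : ∀ i j, G.Adj i j → fund (P i) (P j) 2 2 ≠ 0) (hC : Cond G a b P) :
    Function.Injective (fderiv ℂ (polyMap (PhiP G a b κ)) (pt P s)) := by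
  rw [inj_iff_PhiP]
  intro H τ h1 h2 h3 h4
  have hK : Kset G P H := by
    apply Kset_of_edges
    intro e
    refine ⟨-(τ e) / s e, ?_⟩
    have := h1 e
    apply smul_right_injective _ (hs e)
    simp only [smul_smul, mul_div_cancel₀ _ (hs e)]
    rw [eq_neg_of_add_eq_zero_left this, neg_smul]
  have hH : H = 0 := by
    funext i
    obtain ⟨c, hc⟩ := hC H hK h2 h3 i
    have h5 := h4 i
    rw [hc, Matrix.smul_apply, smul_eq_mul] at h5
    have : c = 0 := (mul_eq_zero.1 h5).resolve_right (hκ i)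
    rw [hc, this, zero_smul]; rfl
  refine ⟨hH, ?_⟩
  funext e
  have := h1 e
  subst hH
  simp only [Pi.zero_apply, dfund_zero, smul_zero, zero_add] at this
  have h6 := congrFun (congrFun this 2) 2
  rw [Matrix.smul_apply, smul_eq_mul] at h6
  exact (mul_eq_zero.1 h6).resolve_right (hF _ _ e.2.1)

theorem Cond_of_inj (P : Config n) (s : EdgeIdx G → ℂ)
    (hκ : ∀ i, P i (κ i).1 (κ i).2 ≠ 0)
    (hi : Function.Injective (fderiv ℂ (polyMap (PhiP G a b κ)) (pt P s))) : Cond G a b P := by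
  rw [inj_iff_PhiP] at hi
  intro H hH ha hb
  let c : Fin n → ℂ := fun i => -(H i (κ i).1 (κ i).2 / P i (κ i).1 (κ i).2)
  have hK := Kset_add G P _ _ hH (Kset_gauge G P 0 c)
  set H' := H + fun i => P i * (0 : Matrix (Fin 4) (Fin 4) ℂ) + c i • P i with hH'
  have hval : ∀ i, H' i = H i + c i • P i := by
    intro i
    simp [hH']
  choose d hd using fun e : EdgeIdx G => hK _ _ e.2.1
  have := (hi H' (fun e => -(s e * d e)) ?_ ?_ ?_ ?_).1
  · intro i
    refine ⟨-c i, ?_⟩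
    have h2 := hval i
    rw [this] at h2
    rw [neg_smul]
    exact eq_neg_of_add_eq_zero_left h2.symm
  · intro e
    rw [hd e]
    module
  · rw [hval, ha]
    simp [c, ha]
  · rw [hval, hb]
    simp [c, hb]
  · intro i
    rw [hval]
    simp only [Matrix.add_apply, Matrix.smul_apply, smul_eq_mul, c]
    field_simp [hκ i]
    simp
end

def freeC {n : ℕ} (P : Config n) : FreeIdx n → ℂ := fun v => P v.1 v.2.1.1 v.2.1.2

theorem exists_freeC {n : ℕ} (y : FreeIdx n → ℂ) :
    ∃ P : Config n, (∀ i, P i 2 3 = 1) ∧ freeC P = y := by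
  refine ⟨fun i => Matrix.of fun r c =>
    if h : (r, c) ≠ ((2 : Fin 3), (3 : Fin 4)) then y (i, ⟨(r, c), h⟩) else 1, ?_, ?_⟩
  · intro i
    simp
  · funext v
    obtain ⟨i, ⟨r, c⟩, h⟩ := v
    simp only [freeC, Matrix.of_apply]
    rw [dif_pos h]

theorem exists_eval_ne {σ : Type*} (p : MvPolynomial σ ℂ) (hp : p ≠ 0) :
    ∃ x, MvPolynomial.eval x p ≠ 0 := by
  by_contra! h
  exact hp (MvPolynomial.funext fun x => by rw [h x, map_zero])

section
variable {n : ℕ} (G : SimpleGraph (Fin n))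

/-- substitute the chart normalization -/
noncomputable def rest : MvPolynomial (NuIdx G) ℂ →ₐ[ℂ] MvPolynomial (FreeIdx n) ℂ :=
  MvPolynomial.aeval (Sum.elim
    (fun v => if h : v.2 ≠ ((2 : Fin 3), (3 : Fin 4)) then MvPolynomial.X (v.1, ⟨v.2, h⟩) else 1)
    (fun _ => 1))

theorem eval_rest (P : Config n) (hP : ∀ i, P i 2 3 = 1) (q : MvPolynomial (NuIdx G) ℂ) :
    MvPolynomial.eval (freeC P) (rest G q) = MvPolynomial.eval (pt P (fun _ => 1)) q := by
  have : ((MvPolynomial.eval (freeC P)).comp (rest G).toRingHom) =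
      MvPolynomial.eval (pt P (fun _ => 1)) := by
    apply MvPolynomial.ringHom_ext
    · intro r
      simp [rest]
    · intro v
      rcases v with ⟨i, r, c⟩ | e
      · by_cases h : (r, c) ≠ ((2 : Fin 3), (3 : Fin 4))
        · simp only [AlgHom.toRingHom_eq_coe, RingHom.comp_apply, RingHom.coe_coe, rest,
            MvPolynomial.aeval_X, Sum.elim_inl, MvPolynomial.eval_X, pt]
          rw [dif_pos h]
          simp [freeC, coords]
        · simp only [AlgHom.toRingHom_eq_coe, RingHom.comp_apply, RingHom.coe_coe, rest,
            MvPolynomial.aeval_X, Sum.elim_inl, MvPolynomial.eval_X, pt]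
          rw [dif_neg h]
          rw [not_not, Prod.mk.injEq] at h
          obtain ⟨rfl, rfl⟩ := h
          simp [coords, hP i]
      · simp [rest, pt]
  exact congrFun (congrArg DFunLike.coe this) q

theorem rest_ne (q : MvPolynomial (NuIdx G) ℂ) (P : Config n) (hP : ∀ i, P i 2 3 = 1)
    (h : MvPolynomial.eval (pt P (fun _ => 1)) q ≠ 0) : rest G q ≠ 0 := by
  intro h0
  apply h
  rw [← eval_rest G P hP, h0, map_zero]

/-- a maximal minor -/
def minor3 {K : Type*} [CommRing K] (P : Matrix (Fin 3) (Fin 4) K) : K :=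
  (P.submatrix id (Fin.castSucc : Fin 3 → Fin 4)).det

theorem rank_of_minor3 (P : Matrix (Fin 3) (Fin 4) ℂ) (h : minor3 P ≠ 0) : P.rank = 3 := by
  rw [rank_three_iff]
  intro v hv
  have h1 : v ᵥ* (P.submatrix id (Fin.castSucc : Fin 3 → Fin 4)) = 0 := by
    funext j
    exact congrFun hv j.castSucc
  exact Matrix.eq_zero_of_vecMul_eq_zero h h1

theorem eval_minor3 (P : Config n) (s : EdgeIdx G → ℂ) (i : Fin n) :
    MvPolynomial.eval (pt P s) (minor3 (vm G i)) = minor3 (P i) := by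
  unfold minor3
  rw [RingHom.map_det]
  congr 1
  rw [← vm_map G P s i]
  rfl

variable [DecidableRel G.Adj]

noncomputable def goodP : MvPolynomial (NuIdx G) ℂ :=
  (∏ e : EdgeIdx G, MvPolynomial.X (Sum.inr e) * fund (vm G e.1.1) (vm G e.1.2) 2 2) *
    (∏ i, minor3 (vm G i)) * ∏ v : Fin n × Fin 3 × Fin 4, MvPolynomial.X (Sum.inl v)

theorem rest_goodP : rest G (goodP G) ≠ 0 := by
  unfold goodP
  rw [map_mul, map_mul, map_prod, map_prod, map_prod]
  refine mul_ne_zero (mul_ne_zero ?_ ?_) ?_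
  · rw [Finset.prod_ne_zero_iff]
    rintro ⟨⟨i, j⟩, hij, hlt⟩ -
    refine rest_ne G _ (fun k => if k = i then nP ![0, 0, 0, 1] else nQ ![0, 0, 0, 1]) ?_ ?_
    · intro k
      by_cases hk : k = i <;> simp [hk, nP, nQ]
    · rw [map_mul, eval_fund_vm]
      change _ * fund (if i = i then nP ![0, 0, 0, 1] else nQ ![0, 0, 0, 1])
        (if j = i then nP ![0, 0, 0, 1] else nQ ![0, 0, 0, 1]) 2 2 ≠ 0
      have hne : ¬ j = i := by
        intro h
        exact absurd h.symm (ne_of_lt hlt)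
      rw [if_pos rfl, if_neg hne, fund_nf]
      simp [pt]
  · rw [Finset.prod_ne_zero_iff]
    rintro i -
    refine rest_ne G _ (fun _ => !![1, 0, 0, 1; 0, 1, 0, 1; 0, 0, 1, 1]) ?_ ?_
    · intro k; simp
    · rw [eval_minor3]
      simp [minor3, Matrix.det_fin_three]
  · rw [Finset.prod_ne_zero_iff]
    rintro v -
    refine rest_ne G _ (fun _ => Matrix.of fun _ _ => 1) ?_ ?_
    · intro k; simp
    · simp [pt, coords]

theorem goodP_ne : goodP G ≠ 0 := by
  intro h
  apply rest_goodP G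
  rw [h, map_zero]

theorem goodP_eval (P : Config n) (s : EdgeIdx G → ℂ)
    (h : MvPolynomial.eval (pt P s) (goodP G) ≠ 0) :
    (∀ e, s e ≠ 0) ∧ (∀ i j, G.Adj i j → fund (P i) (P j) 2 2 ≠ 0) ∧ (∀ i, (P i).rank = 3) ∧
      ∀ i r c, P i r c ≠ 0 := by
  unfold goodP at h
  rw [map_mul, map_mul, map_prod, map_prod, map_prod] at h
  have h1 := Finset.prod_ne_zero_iff.1 (left_ne_zero_of_mul (left_ne_zero_of_mul h))
  have h2 := Finset.prod_ne_zero_iff.1 (right_ne_zero_of_mul (left_ne_zero_of_mul h))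
  have h3 := Finset.prod_ne_zero_iff.1 (right_ne_zero_of_mul h)
  have h4 : ∀ e : EdgeIdx G, s e ≠ 0 ∧ fund (P e.1.1) (P e.1.2) 2 2 ≠ 0 := by
    intro e
    have := h1 e (Finset.mem_univ _)
    rw [map_mul, eval_fund_vm, MvPolynomial.eval_X] at this
    exact ⟨left_ne_zero_of_mul this, right_ne_zero_of_mul this⟩
  refine ⟨fun e => (h4 e).1, ?_, ?_, ?_⟩
  · intro i j hij
    rcases lt_trichotomy i j with hlt | rfl | hlt
    · exact (h4 ⟨(i, j), hij, hlt⟩).2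
    · exact absurd hij (G.loopless.irrefl i)
    · rw [fund_swap, Matrix.transpose_apply]
      exact (h4 ⟨(j, i), hij.symm, hlt⟩).2
  · intro i
    apply rank_of_minor3
    rw [← eval_minor3 G P s]
    exact h2 i (Finset.mem_univ _)
  · intro i r c
    have := h3 (i, r, c) (Finset.mem_univ _)
    rwa [MvPolynomial.eval_X] at this

end

theorem fund_projEquiv {n : ℕ} (Q Q' : Config n) (H : Matrix (Fin 4) (Fin 4) ℂ) (hH : IsUnit H)
    (lam : Fin n → ℂ) (hl : ∀ i, lam i ≠ 0) (h : ∀ i, Q' i = lam i • (Q i * H)) (i j : Fin n) :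
    ∃ c : ℂ, c ≠ 0 ∧ fund (Q' i) (Q' j) = c • fund (Q i) (Q j) := by
  refine ⟨lam i ^ 2 * lam j ^ 2 * H.det, ?_, ?_⟩
  · have : H.det ≠ 0 := ((Matrix.isUnit_iff_isUnit_det H).1 hH).ne_zero
    exact mul_ne_zero (mul_ne_zero (pow_ne_zero _ (hl i)) (pow_ne_zero _ (hl j))) this
  · rw [h i, h j, fund_smul, fund_mul, smul_smul]

theorem rank_of_entry {n : ℕ} (Q Q' : Config n) (H : Matrix (Fin 4) (Fin 4) ℂ) (hH : IsUnit H)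
    (lam : Fin n → ℂ) (hl : ∀ i, lam i ≠ 0) (h : ∀ i, Q' i = lam i • (Q i * H)) (i : Fin n) :
    (Q' i).rank = 3 ↔ (Q i).rank = 3 := by
  rw [← rank_mul_unit (Q i) H hH, h i]
  constructor
  · intro h'
    have := rank_smul_three _ (lam i)⁻¹ (inv_ne_zero (hl i)) h'
    rwa [smul_smul, inv_mul_cancel₀ (hl i), one_smul] at this
  · exact rank_smul_three _ _ (hl i)

theorem sol_of_projEquiv {n : ℕ} (G : SimpleGraph (Fin n)) (P Q Q' : Config n)
    (h : ProjEquiv Q Q') : Q' ∈ SolutionSet G P ↔ Q ∈ SolutionSet G P := by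
  obtain ⟨H, hH, lam, hl, hQ⟩ := h
  constructor
  · rintro ⟨h1, h2⟩
    refine ⟨fun i => (rank_of_entry Q Q' H hH lam hl hQ i).1 (h1 i), fun i j hij => ?_⟩
    obtain ⟨μ, hμ, e⟩ := h2 i j hij
    obtain ⟨c, hc, e'⟩ := fund_projEquiv Q Q' H hH lam hl hQ i j
    refine ⟨c⁻¹ * μ, mul_ne_zero (inv_ne_zero hc) hμ, ?_⟩
    rw [← smul_smul, ← e, e', smul_smul, inv_mul_cancel₀ hc, one_smul]
  · rintro ⟨h1, h2⟩
    refine ⟨fun i => (rank_of_entry Q Q' H hH lam hl hQ i).2 (h1 i), fun i j hij => ?_⟩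
    obtain ⟨μ, hμ, e⟩ := h2 i j hij
    obtain ⟨c, hc, e'⟩ := fund_projEquiv Q Q' H hH lam hl hQ i j
    exact ⟨c * μ, mul_ne_zero hc hμ, by rw [e', e, smul_smul]⟩

theorem exists_entry (Q : Matrix (Fin 3) (Fin 4) ℂ) (h : Q.rank = 3) :
    ∃ k : Fin 3 × Fin 4, Q k.1 k.2 ≠ 0 := by
  by_contra! hc
  have : Q = 0 := by ext r c; exact hc (r, c)
  rw [this, Matrix.rank_zero] at h
  omega

section
variable {n : ℕ} (G : SimpleGraph (Fin n)) [DecidableRel G.Adj]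

/-- The generic rank condition. -/
def RankCond (n : ℕ) (G : SimpleGraph (Fin n)) : Prop :=
  ∃ h : MvPolynomial (FreeIdx n) ℂ, h ≠ 0 ∧
    ∀ P ∈ chartDomain G,
      MvPolynomial.eval (fun v => P v.1 v.2.1.1 v.2.1.2) h ≠ 0 →
      LinearMap.rank ((fderiv ℂ (Faff G) P).toLinearMap ∘ₗ (chartDirections n).subtype) =
        (11 * n - 15 : ℕ)

theorem exists_chart_point (h : MvPolynomial (FreeIdx n) ℂ) (hh : h ≠ 0) :
    ∃ P ∈ chartDomain G, MvPolynomial.eval (freeC P) h ≠ 0 ∧ ∀ i r c, P i r c ≠ 0 := by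
  obtain ⟨y, hy⟩ := exists_eval_ne _ (mul_ne_zero hh (rest_goodP G))
  obtain ⟨P, hP, rfl⟩ := exists_freeC y
  rw [map_mul, eval_rest G P hP] at hy
  obtain ⟨-, h2, h3, h4⟩ := goodP_eval G P _ (right_ne_zero_of_mul hy)
  exact ⟨P, ⟨hP, h3, h2⟩, left_ne_zero_of_mul hy, h4⟩

theorem no_edge_rank (hn : 2 ≤ n) (hG : ∀ i j, ¬ G.Adj i j) : ¬ RankCond n G := by
  rintro ⟨h, hh, hr⟩
  obtain ⟨P, hP, hPh, -⟩ := exists_chart_point G h hh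
  have h1 := (rank_iff_ker hn G P).1 (hr P hP hPh)
  have h2 : LinearMap.ker ((fderiv ℂ (Faff G) P).toLinearMap ∘ₗ (chartDirections n).subtype)
      = ⊤ := by
    rw [eq_top_iff]
    intro H _
    rw [LinearMap.mem_ker]
    exact (fderiv_Faff_eq_zero_iff G P H.1 hP).2 (fun i j hij => absurd hij (hG i j))
  rw [h2, finrank_top, finrank_chartDirections] at h1
  omega

theorem finite_of_rank (hn : 2 ≤ n) (a b : Fin n) (hab : G.Adj a b) (h : RankCond n G) :
    FiniteSolvable G := by
  classical
  obtain ⟨h, hh, hr⟩ := h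
  obtain ⟨P₁, hP₁, hPh, hPe⟩ := exists_chart_point G h hh
  have hC := (rank_iff_Cond hn G P₁ hP₁ a b hab).1 (hr P₁ hP₁ hPh)
  have hinj : ∀ κ : Fin n → Fin 3 × Fin 4, Function.Injective
      (fderiv ℂ (polyMap (PhiP G a b κ)) (pt P₁ (fun _ => 1))) := fun κ =>
    inj_of_Cond G a b κ P₁ _ (fun _ => one_ne_zero) (fun i => hPe _ _ _) hP₁.2.2 hC
  choose p hp0 hp using fun κ => finite_fibre (PhiP G a b κ) _ (hinj κ)
  obtain ⟨x, hx⟩ := exists_eval_ne ((∏ κ, p κ) * goodP G)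
    (mul_ne_zero (Finset.prod_ne_zero_iff.2 fun κ _ => hp0 κ) (goodP_ne G))
  obtain ⟨P₀, s, rfl⟩ := exists_pt x
  let g : MvPolynomial (Fin n × Fin 3 × Fin 4) ℂ :=
    MvPolynomial.aeval (Sum.elim MvPolynomial.X (fun e => MvPolynomial.C (s e)))
      ((∏ κ, p κ) * goodP G)
  have hg : ∀ P : Config n, MvPolynomial.eval (coords P) g =
      MvPolynomial.eval (pt P s) ((∏ κ, p κ) * goodP G) := by
    intro P
    have : ((MvPolynomial.eval (coords P)).comp (MvPolynomial.aeval (R := ℂ)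
        (Sum.elim (MvPolynomial.X (R := ℂ)) (fun e : EdgeIdx G => MvPolynomial.C (s e)))).toRingHom) =
        MvPolynomial.eval (pt P s) := by
      apply MvPolynomial.ringHom_ext
      · intro r
        simp
      · intro v
        rcases v with v | e <;> simp [pt]
    exact congrFun (congrArg DFunLike.coe this) _
  refine ⟨g, ?_, ?_⟩
  · intro h0
    apply hx
    rw [← hg, h0, map_zero]
  intro P hPg
  have hPg' : MvPolynomial.eval (coords P) g ≠ 0 := hPg
  rw [hg, map_mul, map_prod] at hPg'
  have hpk : ∀ κ, MvPolynomial.eval (pt P s) (p κ) ≠ 0 := fun κ =>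
    Finset.prod_ne_zero_iff.1 (left_ne_zero_of_mul hPg') κ (Finset.mem_univ _)
  obtain ⟨hs, hF, hrk, hent⟩ := goodP_eval G P s (right_ne_zero_of_mul hPg')
  refine ⟨(⋃ κ, {Q | ∃ t, polyMap (PhiP G a b κ) (pt Q t) = polyMap (PhiP G a b κ) (pt P s)}) ∩
    SolutionSet G P, ?_, ?_⟩
  · apply Set.Finite.inter_of_left
    apply Set.finite_iUnion
    intro κ
    refine ((hp κ _ (hpk κ)).image
      (fun x => (fun i => Matrix.of fun r c => x (Sum.inl (i, r, c)) : Config n))).subset ?_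
    rintro Q ⟨t, ht⟩
    exact ⟨pt Q t, ht, rfl⟩
  · ext Q
    constructor
    · intro hQ
      obtain ⟨μ, hμ, he⟩ := hQ.2 a b hab
      obtain ⟨H, hH, σ, hσ, e1, e2⟩ := global_gauge (P a) (P b) (Q a) (Q b) (hrk a) (hrk b)
        (hQ.1 a) (hQ.1 b) (hF a b hab) μ hμ he
      choose κ hκ using fun i => exists_entry (Q i * H) (by rw [rank_mul_unit _ _ hH]; exact hQ.1 i)
      let lam : Fin n → ℂ := fun i => P i (κ i).1 (κ i).2 / (Q i * H) (κ i).1 (κ i).2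
      have hlam : ∀ i, lam i ≠ 0 := fun i => div_ne_zero (hent _ _ _) (hκ i)
      let Q' : Config n := fun i => lam i • (Q i * H)
      have hPE : ProjEquiv Q Q' := ⟨H, hH, lam, hlam, fun i => rfl⟩
      have hQ' : Q' ∈ SolutionSet G P := (sol_of_projEquiv G P Q Q' hPE).2 hQ
      refine ⟨Q', ⟨Set.mem_iUnion.2 ⟨κ, ?_⟩, hQ'⟩, hPE⟩
      choose ν hν hνe using fun e : EdgeIdx G => hQ'.2 _ _ e.2.1
      refine ⟨fun e => s e / ν e, ?_⟩
      rw [polyMap_PhiP_eq_iff]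
      refine ⟨fun e => ?_, ?_, ?_, fun i => ?_⟩
      · rw [hνe e, smul_smul, div_mul_cancel₀ _ (hν e)]
      · have : lam a * σ = 1 := by
          simp only [lam, e1, Matrix.smul_apply, smul_eq_mul]
          have := hent a (κ a).1 (κ a).2
          field_simp
        simp only [Q']
        rw [e1, smul_smul, this, one_smul]
      · have : lam b = 1 := by
          simp only [lam, e2]
          exact div_self (hent _ _ _)
        simp only [Q']
        rw [e2, this, one_smul]
      · simp only [Q', Matrix.smul_apply, smul_eq_mul, lam]
        exact div_mul_cancel₀ _ (hκ i)
    · rintro ⟨Q', ⟨-, hQ'⟩, hPE⟩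
      exact (sol_of_projEquiv G P Q Q' hPE).1 hQ'

theorem no_edge_finite (hn : 2 ≤ n) (hG : ∀ i j, ¬ G.Adj i j) : ¬ FiniteSolvable G := by
  rintro ⟨g, hg, hall⟩
  obtain ⟨x, hx⟩ := exists_eval_ne g hg
  let P : Config n := fun i => Matrix.of fun r c => x (i, r, c)
  obtain ⟨T, hT, hS⟩ := hall P hx
  let a : Fin n := ⟨0, by omega⟩
  let b : Fin n := ⟨1, by omega⟩
  have hba : b ≠ a := by simp [a, b]
  let Q : ℂ → Config n := fun z i => if i = a then nP ![z, 0, 1, 0] else nQ ![1, 0, 0, 0]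
  have hQ : ∀ z, Q z ∈ SolutionSet G P := by
    intro z
    refine ⟨fun i => ?_, fun i j hij => absurd hij (hG i j)⟩
    rw [rank_three_iff]
    intro v hv
    have w := fun j => congrFun hv j
    by_cases hi : i = a
    · simp only [Q, if_pos hi, Matrix.vecMul, dotProduct, Fin.sum_univ_succ, nP] at w
      have w0 := w 0
      have w1 := w 1
      have w2 := w 2
      simp at w0 w1 w2
      rw [w2] at w0
      funext k
      fin_cases k
      · simpa using w0
      · exact w1
      · exact w2
    · simp only [Q, if_neg hi, Matrix.vecMul, dotProduct, Fin.sum_univ_succ, nQ] at w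
      have w0 := w 0
      have w1 := w 2
      have w2 := w 3
      simp at w0 w1 w2
      funext k
      fin_cases k
      · exact w1
      · exact w2
      · exact w0
  have hQ2 : ∀ z, ∃ Q' : T, ProjEquiv (Q z) Q'.1 := by
    intro z
    have := hQ z
    rw [hS] at this
    obtain ⟨Q', h1, h2⟩ := this
    exact ⟨⟨Q', h1⟩, h2⟩
  choose f hf using hQ2
  haveI : Finite T := hT
  obtain ⟨z, z', hne, he⟩ := Finite.exists_ne_map_eq_of_infinite f
  have hfz' := hf z'
  rw [← he] at hfz'
  obtain ⟨H, hH, l, hl, e⟩ := hf z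
  obtain ⟨H', hH', l', hl', e'⟩ := hfz'
  obtain ⟨c, hc, k⟩ := fund_projEquiv _ _ H hH l hl e a b
  obtain ⟨c', hc', k'⟩ := fund_projEquiv _ _ H' hH' l' hl' e' a b
  rw [k] at k'
  simp only [Q, if_pos, if_neg hba, fund_nf] at k'
  have k22 := congrFun (congrFun k' 2) 2
  have k20 := congrFun (congrFun k' 2) 0
  simp at k22 k20
  rw [k22] at k20
  have k20' := mul_left_cancel₀ hc' k20
  first
  | exact hne k20'
  | exact hne k20'.symm

theorem projEquiv_rigid (a b : Fin n) (P Q Q2 Q' : Config n) (hab : G.Adj a b)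
    (hrk : ∀ i, (P i).rank = 3) (hF : fund (P a) (P b) 2 2 ≠ 0)
    (h1 : ProjEquiv Q Q') (h2 : ProjEquiv Q2 Q') (ha : Q a = P a) (hb : Q b = P b)
    (ha2 : Q2 a = P a) (hb2 : Q2 b = P b) (he : ∀ i, Q i 2 3 = Q2 i 2 3)
    (hne : ∀ i, Q2 i 2 3 ≠ 0) : Q = Q2 := by
  obtain ⟨H, hH, l, hl, e⟩ := h1
  obtain ⟨H2, hH2, l2, hl2, e2⟩ := h2
  have hu : IsUnit H2.det := (Matrix.isUnit_iff_isUnit_det H2).1 hH2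
  have key : ∀ i, Q i * (H * H2⁻¹) = (l2 i / l i) • Q2 i := by
    intro i
    have h3 : l i • (Q i * H) = l2 i • (Q2 i * H2) := by rw [← e, ← e2]
    have h4 : Q i * H = (l2 i / l i) • (Q2 i * H2) := by
      apply smul_right_injective _ (hl i)
      simp only
      rw [h3, smul_smul, mul_div_cancel₀ _ (hl i)]
    rw [← Matrix.mul_assoc, h4, Matrix.smul_mul, Matrix.mul_assoc, Matrix.mul_nonsing_inv _ hu,
      Matrix.mul_one]
  have ka := key a
  have kb := key b
  rw [ha, ha2] at ka
  rw [hb, hb2] at kb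
  obtain ⟨-, hA⟩ := stab (P a) (P b) (hrk a) (hrk b) hF _ _ _ ka kb
  have hc : l2 a / l a ≠ 0 := div_ne_zero (hl2 a) (hl a)
  funext i
  have ki := key i
  rw [hA, Matrix.mul_smul, Matrix.mul_one] at ki
  have k23 := congrFun (congrFun ki 2) 3
  rw [Matrix.smul_apply, Matrix.smul_apply, smul_eq_mul, smul_eq_mul, he i] at k23
  have h5 := mul_right_cancel₀ (hne i) k23
  rw [← h5] at ki
  exact smul_right_injective _ hc ki

theorem exists_inj (a b : Fin n) (hab : G.Adj a b) (h : FiniteSolvable G) :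
    ∃ x, Function.Injective (fderiv ℂ (polyMap (PhiP G a b (fun _ => (2, 3)))) x) := by
  by_contra! hno
  obtain ⟨g, hg, hall⟩ := h
  have hw : MvPolynomial.rename Sum.inl g * goodP G ≠ 0 := by
    refine mul_ne_zero ?_ (goodP_ne G)
    intro h0
    apply hg
    apply MvPolynomial.rename_injective (Sum.inl : _ → NuIdx G) Sum.inl_injective
    rw [h0, map_zero]
  have hev : ∀ (P : Config n) (s : EdgeIdx G → ℂ), MvPolynomial.eval (pt P s)
      (MvPolynomial.rename Sum.inl g) = MvPolynomial.eval (coords P) g := by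
    intro P s
    rw [MvPolynomial.eval_rename]
    rfl
  obtain ⟨x, hx, hinf⟩ := infinite_fibre _ hno _ hw
  obtain ⟨P, s, rfl⟩ := exists_pt x
  rw [map_mul, hev] at hx
  obtain ⟨T, hT, hS⟩ := hall P (left_ne_zero_of_mul hx)
  obtain ⟨hs, hF, hrk, hent⟩ := goodP_eval G P s (right_ne_zero_of_mul hx)
  have hf : ∀ y, ∃ Q', y ∈ {y | MvPolynomial.eval y (MvPolynomial.rename Sum.inl g * goodP G) ≠ 0 ∧
      polyMap (PhiP G a b (fun _ => (2, 3))) y = polyMap (PhiP G a b (fun _ => (2, 3))) (pt P s)} →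
      (Q' ∈ T ∧ ∀ Q t, y = pt Q t → ProjEquiv Q Q') := by
    intro y
    by_cases hy : y ∈ {y | MvPolynomial.eval y (MvPolynomial.rename Sum.inl g * goodP G) ≠ 0 ∧
      polyMap (PhiP G a b (fun _ => (2, 3))) y = polyMap (PhiP G a b (fun _ => (2, 3))) (pt P s)}
    · obtain ⟨Q, t, rfl⟩ := exists_pt y
      obtain ⟨hy1, hy2⟩ := hy
      rw [map_mul] at hy1
      obtain ⟨ht, hFQ, hrkQ, hentQ⟩ := goodP_eval G Q t (right_ne_zero_of_mul hy1)
      rw [polyMap_PhiP_eq_iff] at hy2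
      have hkey : ∀ e : EdgeIdx G, fund (Q e.1.1) (Q e.1.2) =
          (s e / t e) • fund (P e.1.1) (P e.1.2) := by
        intro e
        apply smul_right_injective _ (ht e)
        simp only
        rw [hy2.1 e, smul_smul, mul_div_cancel₀ _ (ht e)]
      have hQS : Q ∈ SolutionSet G P := by
        refine ⟨hrkQ, fun i j hij => ?_⟩
        rcases lt_trichotomy i j with hlt | rfl | hlt
        · exact ⟨_, div_ne_zero (hs _) (ht _), hkey ⟨(i, j), hij, hlt⟩⟩
        · exact absurd hij (G.loopless.irrefl i)
        · refine ⟨s ⟨(j, i), hij.symm, hlt⟩ / t ⟨(j, i), hij.symm, hlt⟩,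
            div_ne_zero (hs _) (ht _), ?_⟩
          · rw [fund_swap (Q j), fund_swap (P j), ← Matrix.transpose_smul,
              hkey ⟨(j, i), hij.symm, hlt⟩]
      rw [hS] at hQS
      obtain ⟨Q', hQ', hPE⟩ := hQS
      refine ⟨Q', fun _ => ⟨hQ', fun Q1 t1 h1 => ?_⟩⟩
      rw [← (pt_injective h1).1]
      exact hPE
    · exact ⟨P, fun h => absurd h hy⟩
  choose f hf using hf
  obtain ⟨y, hy, y', hy', hne, hff⟩ := hinf.exists_ne_map_eq_of_mapsTo
    (fun y hy => (hf y hy).1) hT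
  obtain ⟨Q, t, rfl⟩ := exists_pt y
  obtain ⟨Q2, t2, rfl⟩ := exists_pt y'
  have p1 := (hf _ hy).2 Q t rfl
  have p2 := (hf _ hy').2 Q2 t2 rfl
  rw [← hff] at p2
  have c1 := (polyMap_PhiP_eq_iff G a b _ _ _ _ _).1 hy.2
  have c2 := (polyMap_PhiP_eq_iff G a b _ _ _ _ _).1 hy'.2
  have hy1 := hy'.1
  rw [map_mul] at hy1
  obtain ⟨-, hF2, -, hent2⟩ := goodP_eval G Q2 t2 (right_ne_zero_of_mul hy1)
  have hQQ := projEquiv_rigid G a b P Q Q2 _ hab hrk (hF a b hab) p1 p2 c1.2.1 c1.2.2.1 c2.2.1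
    c2.2.2.1 (fun i => (c1.2.2.2 i).trans (c2.2.2.2 i).symm) (fun i => hent2 i 2 3)
  subst hQQ
  apply hne
  congr 1
  funext e
  have h6 := (c1.1 e).trans (c2.1 e).symm
  have h7 := congrFun (congrFun h6 2) 2
  rw [Matrix.smul_apply, Matrix.smul_apply, smul_eq_mul, smul_eq_mul] at h7
  exact mul_right_cancel₀ (hF2 _ _ e.2.1) h7

theorem rank_of_finite (hn : 2 ≤ n) (a b : Fin n) (hab : G.Adj a b) (h : FiniteSolvable G) :
    RankCond n G := by
  obtain ⟨x₀, hx₀⟩ := exists_inj G a b hab h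
  obtain ⟨m, hm, hm2⟩ := exists_minor _ x₀ hx₀
  have hm0 : m ≠ 0 := by
    rintro rfl
    exact hm (map_zero _)
  obtain ⟨x, hx⟩ := exists_eval_ne _ (mul_ne_zero hm0 (goodP_ne G))
  obtain ⟨P, s, rfl⟩ := exists_pt x
  rw [map_mul] at hx
  obtain ⟨hs, hF, hrk, hent⟩ := goodP_eval G P s (right_ne_zero_of_mul hx)
  have hC := Cond_of_inj G a b _ P s (fun i => hent i _ _) (hm2 _ (left_ne_zero_of_mul hx))
  let l : Fin n → ℂ := fun i => (P i 2 3)⁻¹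
  have hl : ∀ i, l i ≠ 0 := fun i => inv_ne_zero (hent i 2 3)
  have hC' := Cond_scale G a b P l hl hC
  have h1 : ∀ i, (l i • P i) 2 3 = 1 := by
    intro i
    simp only [Matrix.smul_apply, smul_eq_mul, l]
    exact inv_mul_cancel₀ (hent i 2 3)
  have hinj := inj_of_Cond G a b (fun _ => (2, 3)) (fun i => l i • P i) (fun _ => 1)
    (fun _ => one_ne_zero) (fun i => by
      change (l i • P i) 2 3 ≠ 0
      rw [h1]; exact one_ne_zero) (fun i j hij => by
      rw [fund_smul, Matrix.smul_apply, smul_eq_mul]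
      exact mul_ne_zero (mul_ne_zero (pow_ne_zero _ (hl i)) (pow_ne_zero _ (hl j))) (hF i j hij)) hC'
  obtain ⟨m', hm', hm2'⟩ := exists_minor _ _ hinj
  refine ⟨rest G m', rest_ne G m' _ h1 hm', fun P hP hPm => ?_⟩
  have h3 : MvPolynomial.eval (freeC P) (rest G m') ≠ 0 := hPm
  rw [eval_rest G P hP.1] at h3
  rw [rank_iff_Cond hn G P hP a b hab]
  refine Cond_of_inj G a b _ P _ (fun i => ?_) (hm2' _ h3)
  change P i 2 3 ≠ 0
  rw [hP.1 i]
  exact one_ne_zero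

end

theorem main_aux {n : ℕ} (hn : 2 ≤ n)
    (G : SimpleGraph (Fin n)) [DecidableRel G.Adj] : FiniteSolvable G ↔ RankCond n G := by
  by_cases hG : ∃ i j, G.Adj i j
  · obtain ⟨a, b, hab⟩ := hG
    exact ⟨rank_of_finite G hn a b hab, finite_of_rank G hn a b hab⟩
  · push Not at hG
    exact ⟨fun h => absurd h (no_edge_finite G hn hG), fun h => absurd h (no_edge_rank G hn hG)⟩

/-- the affine fundamental-matrix map `𝓕_G^aff` is differentiable at
every point of the chart domain `U`, and `G` is finite solvable if and only if,
for a generic configuration `P` in `U`, the derivative of `𝓕_G^aff` at `P`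
(restricted to tuples whose `(3,4)` entries vanish) has rank `11n − 15`. -/
theorem finiteSolvable_iff_generic_rank_fderiv_Faff {n : ℕ} (hn : 2 ≤ n)
    (G : SimpleGraph (Fin n)) [DecidableRel G.Adj] :
    (∀ P ∈ chartDomain G, DifferentiableAt ℂ (Faff G) P) ∧
      (FiniteSolvable G ↔
        ∃ h : MvPolynomial (FreeIdx n) ℂ, h ≠ 0 ∧
          ∀ P ∈ chartDomain G,
            MvPolynomial.eval (fun v => P v.1 v.2.1.1 v.2.1.2) h ≠ 0 →
            LinearMap.rank
                ((fderiv ℂ (Faff G) P).toLinearMap ∘ₗ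
                  (chartDirections n).subtype) =
              (11 * n - 15 : ℕ)) := by
  exact ⟨fun P hP => differentiableAt_Faff G P hP, main_aux hn G⟩
end

section
/- Let P_i and P_j be real 3×4 matrices of rank 3 with distinct centers. Then a real 3×3 matrix F satisfies F ≠ 0 and P_jᵀ F P_i + P_iᵀ Fᵀ P_j = 0 (i.e., P_jᵀ F P_i is skew-symmetric) if and only if F = λ · 𝓕(P_i, P_j) for some nonzero real number λ. -/
open Matrix

lemma fund_mul_right (P Q : Matrix (Fin 3) (Fin 4) ℝ) (G : Matrix (Fin 4) (Fin 4) ℝ) :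
    fund (P * G) (Q * G) = G.det • fund P Q := by
  ext h k
  simp only [fund, Matrix.of_apply, Matrix.smul_apply, smul_eq_mul]
  rw [mul_left_comm, mul_comm G.det, ← Matrix.det_mul]
  congr 2
  ext r c
  simp only [Matrix.of_apply, Matrix.mul_apply]
  split_ifs <;> rfl

/-- The three columns of the first camera in adapted coordinates. -/
def subA (P : Matrix (Fin 3) (Fin 4) ℝ) : Matrix (Fin 3) (Fin 3) ℝ :=
  Matrix.of fun r => ![P r 0, P r 1, P r 2]

/-- The three columns of the second camera in adapted coordinates. -/
def subB (P : Matrix (Fin 3) (Fin 4) ℝ) : Matrix (Fin 3) (Fin 3) ℝ :=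
  Matrix.of fun r => ![P r 0, P r 1, P r 3]

/-- The normal form. -/
def JJ : Matrix (Fin 3) (Fin 3) ℝ := !![0, 1, 0; -1, 0, 0; 0, 0, 0]

set_option maxHeartbeats 4000000 in
lemma normal_form (P Q : Matrix (Fin 3) (Fin 4) ℝ) (hP : ∀ r, P r 3 = 0) (hQ : ∀ r, Q r 2 = 0) :
    (subB Q)ᵀ * fund P Q * subA P = ((subA P).det * (subB Q).det) • JJ ∨
    (subB Q)ᵀ * fund P Q * subA P = (-((subA P).det * (subB Q).det)) • JJ := by
  left
  ext a b
  fin_cases a <;> fin_cases b <;>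
  · simp [subA, subB, JJ, fund, Matrix.mul_apply, Fin.sum_univ_succ, Matrix.det_succ_row_zero,
      Fin.succAbove, hP, hQ]
    try ring

lemma vecMul_inj (P : Matrix (Fin 3) (Fin 4) ℝ) (h : P.rank = 3) (w : Fin 3 → ℝ)
    (hw : w ᵥ* P = 0) : w = 0 := by
  have h1 : Pᵀ.rank = 3 := by rw [Matrix.rank_transpose, h]
  have h2 := LinearMap.finrank_range_add_finrank_ker Pᵀ.mulVecLin
  rw [Matrix.rank] at h1
  simp only [h1, Module.finrank_fintype_fun_eq_card, Fintype.card_fin] at h2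
  have h3 : LinearMap.ker Pᵀ.mulVecLin = ⊥ := Submodule.finrank_eq_zero.mp (by omega)
  have h4 : w ∈ LinearMap.ker Pᵀ.mulVecLin := by
    simp [LinearMap.mem_ker, Matrix.mulVec_transpose, hw]
  rw [h3] at h4
  simpa using h4

lemma finrank_ker_one (P : Matrix (Fin 3) (Fin 4) ℝ) (h : P.rank = 3) :
    Module.finrank ℝ (LinearMap.ker P.mulVecLin) = 1 := by
  have h2 := LinearMap.finrank_range_add_finrank_ker P.mulVecLin
  rw [Matrix.rank] at h
  simp only [h, Module.finrank_fintype_fun_eq_card, Fintype.card_fin] at h2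
  omega

lemma vecMul_G (P : Matrix (Fin 3) (Fin 4) ℝ) (h : P.rank = 3) (G : Matrix (Fin 4) (Fin 4) ℝ)
    (hG : IsUnit G.det) (w : Fin 3 → ℝ) (hw : w ᵥ* (P * G) = 0) : w = 0 := by
  apply vecMul_inj P h
  have : (w ᵥ* (P * G)) ᵥ* G⁻¹ = 0 := by rw [hw, Matrix.zero_vecMul]
  rwa [Matrix.vecMul_vecMul, Matrix.mul_assoc, Matrix.mul_nonsing_inv _ hG, Matrix.mul_one] at this

lemma detA (P : Matrix (Fin 3) (Fin 4) ℝ) (h : ∀ w : Fin 3 → ℝ, w ᵥ* P = 0 → w = 0)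
    (hP : ∀ r, P r 3 = 0) : (subA P).det ≠ 0 := by
  intro h0
  obtain ⟨w, hw, hw'⟩ := Matrix.exists_vecMul_eq_zero_iff.mpr h0
  apply hw
  apply h
  ext c
  have e0 := congrFun hw' 0
  have e1 := congrFun hw' 1
  have e2 := congrFun hw' 2
  simp [subA, Matrix.vecMul, dotProduct, Fin.sum_univ_succ] at e0 e1 e2
  fin_cases c <;> simp [Matrix.vecMul, dotProduct, Fin.sum_univ_succ, hP, e0, e1, e2]

lemma detB (P : Matrix (Fin 3) (Fin 4) ℝ) (h : ∀ w : Fin 3 → ℝ, w ᵥ* P = 0 → w = 0)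
    (hP : ∀ r, P r 2 = 0) : (subB P).det ≠ 0 := by
  intro h0
  obtain ⟨w, hw, hw'⟩ := Matrix.exists_vecMul_eq_zero_iff.mpr h0
  apply hw
  apply h
  ext c
  have e0 := congrFun hw' 0
  have e1 := congrFun hw' 1
  have e2 := congrFun hw' 2
  simp [subB, Matrix.vecMul, dotProduct, Fin.sum_univ_succ] at e0 e1 e2
  fin_cases c <;> simp [Matrix.vecMul, dotProduct, Fin.sum_univ_succ, hP, e0, e1, e2]

lemma exists_G (P Q : Matrix (Fin 3) (Fin 4) ℝ) (hi : P.rank = 3) (hj : Q.rank = 3)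
    (hc : LinearMap.ker P.mulVecLin ≠ LinearMap.ker Q.mulVecLin) :
    ∃ G : Matrix (Fin 4) (Fin 4) ℝ, IsUnit G.det ∧ (∀ r, (P * G) r 3 = 0) ∧
      (∀ r, (Q * G) r 2 = 0) := by
  have hp := finrank_ker_one P hi
  have hq := finrank_ker_one Q hj
  have n1 : ¬ LinearMap.ker P.mulVecLin ≤ LinearMap.ker Q.mulVecLin := fun h =>
    hc (Submodule.eq_of_le_of_finrank_eq h (hp.trans hq.symm))
  have n2 : ¬ LinearMap.ker Q.mulVecLin ≤ LinearMap.ker P.mulVecLin := fun h =>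
    hc (Submodule.eq_of_le_of_finrank_eq h (hq.trans hp.symm)).symm
  obtain ⟨c, hcP, hcQ⟩ := SetLike.not_le_iff_exists.mp n1
  obtain ⟨d, hdQ, hdP⟩ := SetLike.not_le_iff_exists.mp n2
  simp only [LinearMap.mem_ker, Matrix.mulVecLin_apply] at hcP hcQ hdQ hdP
  have li2 : LinearIndependent ℝ ![d, c] := by
    rw [LinearIndependent.pair_iff]
    intro s t hst
    have a1 := congrArg (fun x => P *ᵥ x) hst
    have a2 := congrArg (fun x => Q *ᵥ x) hst
    simp [Matrix.mulVec_add, Matrix.mulVec_smul, hcP, hdQ, hcQ, hdP] at a1 a2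
    exact ⟨a1, a2⟩
  obtain ⟨v, li3⟩ := exists_linearIndependent_cons_of_lt_finrank (n := 2) li2
    (by rw [Module.finrank_fintype_fun_eq_card, Fintype.card_fin]; norm_num)
  obtain ⟨u, li4⟩ := exists_linearIndependent_cons_of_lt_finrank (n := 3) li3
    (by rw [Module.finrank_fintype_fun_eq_card, Fintype.card_fin]; norm_num)
  refine ⟨(Matrix.of (Fin.cons u (Fin.cons v ![d, c]) : Fin 4 → Fin 4 → ℝ))ᵀ, ?_, ?_, ?_⟩
  · rw [Matrix.det_transpose, ← Matrix.isUnit_iff_isUnit_det,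
      ← Matrix.linearIndependent_rows_iff_isUnit]
    exact li4
  · intro r
    exact congrFun hcP r
  · intro r
    exact congrFun hdQ r

lemma skew_entries (P Q : Matrix (Fin 3) (Fin 4) ℝ) (hP : ∀ r, P r 3 = 0) (hQ : ∀ r, Q r 2 = 0)
    (F : Matrix (Fin 3) (Fin 3) ℝ) :
    (Qᵀ * F * P + Pᵀ * Fᵀ * Q = 0) ↔ ∃ t : ℝ, (subB Q)ᵀ * F * subA P = t • JJ := by
  have key : Pᵀ * Fᵀ * Q = (Qᵀ * F * P)ᵀ := by
    simp [Matrix.transpose_mul, Matrix.mul_assoc]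
  rw [key]
  set M := (subB Q)ᵀ * F * subA P with hM
  have hN : Qᵀ * F * P = !![M 0 0, M 0 1, M 0 2, 0; M 1 0, M 1 1, M 1 2, 0; 0, 0, 0, 0;
      M 2 0, M 2 1, M 2 2, 0] := by
    ext a b
    fin_cases a <;> fin_cases b <;>
      simp [hM, subA, subB, Matrix.mul_apply, Fin.sum_univ_succ, hP, hQ]
  rw [hN]
  clear_value M
  clear hM hN key
  constructor
  · intro h
    refine ⟨M 0 1, ?_⟩
    have e := fun a b => congrFun (congrFun h a) b
    have e00 := e 0 0
    have e01 := e 0 1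
    have e11 := e 1 1
    have e02 := e 0 2
    have e12 := e 1 2
    have e32 := e 3 2
    have e03 := e 0 3
    have e13 := e 1 3
    simp at e00 e01 e11 e02 e12 e32 e03 e13
    ext a b
    fin_cases a <;> fin_cases b <;> simp [JJ, e00, e11, e02, e12, e32, e03, e13] <;> linarith
  · rintro ⟨t, rfl⟩
    ext a b
    fin_cases a <;> fin_cases b <;> simp [JJ]

lemma skew_G (P Q : Matrix (Fin 3) (Fin 4) ℝ) (G : Matrix (Fin 4) (Fin 4) ℝ) (hG : IsUnit G.det)
    (F : Matrix (Fin 3) (Fin 3) ℝ) :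
    (Qᵀ * F * P + Pᵀ * Fᵀ * Q = 0) ↔
      ((Q * G)ᵀ * F * (P * G) + (P * G)ᵀ * Fᵀ * (Q * G) = 0) := by
  have e : (Q * G)ᵀ * F * (P * G) + (P * G)ᵀ * Fᵀ * (Q * G) =
      Gᵀ * (Qᵀ * F * P + Pᵀ * Fᵀ * Q) * G := by
    simp only [Matrix.transpose_mul, Matrix.mul_add, Matrix.add_mul, Matrix.mul_assoc]
  rw [e]
  constructor
  · intro h
    rw [h]; simp
  · intro h
    have hG' : IsUnit G := (Matrix.isUnit_iff_isUnit_det G).mpr hG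
    have hGt : IsUnit Gᵀ := (Matrix.isUnit_iff_isUnit_det _).mpr (by rwa [Matrix.det_transpose])
    rw [hG'.mul_left_eq_zero] at h
    rwa [hGt.mul_right_eq_zero] at h

/-- for cameras `Pi`, `Pj` (rank-3) with distinct centers, a `3 × 3`
matrix `F` is nonzero and makes `Pjᵀ F Pi` skew-symmetric if and only if `F` is a
nonzero scalar multiple of the fundamental matrix `𝓕(Pi, Pj)`. -/
theorem skew_iff_scalar_multiple_of_fund (Pi Pj : Matrix (Fin 3) (Fin 4) ℝ)
    (hi : Pi.rank = 3) (hj : Pj.rank = 3)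
    (hc : LinearMap.ker Pi.mulVecLin ≠ LinearMap.ker Pj.mulVecLin)
    (F : Matrix (Fin 3) (Fin 3) ℝ) :
    (F ≠ 0 ∧ Pjᵀ * F * Pi + Piᵀ * Fᵀ * Pj = 0) ↔
      ∃ l : ℝ, l ≠ 0 ∧ F = l • fund Pi Pj := by
  obtain ⟨G, hG, hP, hQ⟩ := exists_G Pi Pj hi hj hc
  have dA := detA _ (vecMul_G Pi hi G hG) hP
  have dB := detB _ (vecMul_G Pj hj G hG) hQ
  rw [skew_G Pi Pj G hG, skew_entries _ _ hP hQ]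
  have nf : ∃ s : ℝ, s ≠ 0 ∧
      (subB (Pj * G))ᵀ * fund Pi Pj * subA (Pi * G) = s • JJ := by
    have h1 : fund Pi Pj = (G.det)⁻¹ • fund (Pi * G) (Pj * G) := by
      rw [fund_mul_right, smul_smul, inv_mul_cancel₀ hG.ne_zero, one_smul]
    have hd := mul_ne_zero dA dB
    have hg := inv_ne_zero hG.ne_zero
    rcases normal_form _ _ hP hQ with h | h
    · refine ⟨_, mul_ne_zero hg hd, ?_⟩
      rw [h1, Matrix.mul_smul, Matrix.smul_mul, h, smul_smul]
    · refine ⟨_, mul_ne_zero hg (neg_ne_zero.mpr hd), ?_⟩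
      rw [h1, Matrix.mul_smul, Matrix.smul_mul, h, smul_smul]
  obtain ⟨s, hs, nf⟩ := nf
  generalize subA (Pi * G) = A at *
  generalize subB (Pj * G) = B at *
  have uA : IsUnit A := (Matrix.isUnit_iff_isUnit_det A).mpr (isUnit_iff_ne_zero.mpr dA)
  have uB : IsUnit Bᵀ := (Matrix.isUnit_iff_isUnit_det _).mpr
    (by rw [Matrix.det_transpose]; exact isUnit_iff_ne_zero.mpr dB)
  have J0 : JJ ≠ 0 := fun h => by simpa [JJ] using congrFun (congrFun h 0) 1
  constructor
  · rintro ⟨hF, t, ht⟩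
    have t0 : t ≠ 0 := by
      rintro rfl
      rw [zero_smul, uA.mul_left_eq_zero, uB.mul_right_eq_zero] at ht
      exact hF ht
    refine ⟨t / s, div_ne_zero t0 hs, ?_⟩
    apply uB.mul_left_cancel
    apply uA.mul_right_cancel
    rw [ht, Matrix.mul_smul, Matrix.smul_mul, nf, smul_smul, div_mul_cancel₀ _ hs]
  · rintro ⟨l, hl, rfl⟩
    have e : Bᵀ * (l • fund Pi Pj) * A = (l * s) • JJ := by
      rw [Matrix.mul_smul, Matrix.smul_mul, nf, smul_smul]
    refine ⟨fun h0 => ?_, _, e⟩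
    rw [h0, Matrix.mul_zero, Matrix.zero_mul] at e
    exact smul_ne_zero (mul_ne_zero hl hs) J0 e.symm
end

section
/- For all real 3×4 matrices P_i and P_j, the matrix S := P_jᵀ 𝓕(P_i, P_j) P_i is skew-symmetric; that is, P_jᵀ 𝓕(P_i, P_j) P_i + P_iᵀ 𝓕(P_i, P_j)ᵀ P_j = 0. -/
open Matrix

/-- Explicit expansion of a determinant of size four. -/
lemma det_four_aux (M : Matrix (Fin 4) (Fin 4) ℝ) :
    M.det =
      (M 0 0 * M 1 1 - M 0 1 * M 1 0) * (M 2 2 * M 3 3 - M 2 3 * M 3 2)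
      - (M 0 0 * M 1 2 - M 0 2 * M 1 0) * (M 2 1 * M 3 3 - M 2 3 * M 3 1)
      + (M 0 0 * M 1 3 - M 0 3 * M 1 0) * (M 2 1 * M 3 2 - M 2 2 * M 3 1)
      + (M 0 1 * M 1 2 - M 0 2 * M 1 1) * (M 2 0 * M 3 3 - M 2 3 * M 3 0)
      - (M 0 1 * M 1 3 - M 0 3 * M 1 1) * (M 2 0 * M 3 2 - M 2 2 * M 3 0)
      + (M 0 2 * M 1 3 - M 0 3 * M 1 2) * (M 2 0 * M 3 1 - M 2 1 * M 3 0) := by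
  rw [Matrix.det_succ_row_zero]
  simp [Fin.sum_univ_succ, Matrix.det_fin_three, Fin.succAbove, Matrix.submatrix]
  ring

/-- Explicit expansion of the entries of the fundamental matrix. -/
lemma fund_aux (P Q : Matrix (Fin 3) (Fin 4) ℝ) (h k : Fin 3) :
    fund P Q h k = (-1 : ℝ) ^ ((h : ℕ) + (k : ℕ)) *
      (Matrix.of ![P (k.succAbove 0), P (k.succAbove 1),
        Q (h.succAbove 0), Q (h.succAbove 1)]).det := by
  unfold fund
  rw [Matrix.of_apply]
  congr 2
  ext r c
  fin_cases r <;> rfl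

set_option maxHeartbeats 4000000 in
/-- `S := Pⱼᵀ 𝓕(Pᵢ, Pⱼ) Pᵢ` is skew-symmetric, i.e.
`Pⱼᵀ 𝓕(Pᵢ, Pⱼ) Pᵢ + Pᵢᵀ 𝓕(Pᵢ, Pⱼ)ᵀ Pⱼ = 0`. -/
theorem fund_skew (Pi Pj : Matrix (Fin 3) (Fin 4) ℝ) :
    Pjᵀ * fund Pi Pj * Pi + Piᵀ * (fund Pi Pj)ᵀ * Pj = 0 := by
  have s00 : (0 : Fin 3).succAbove (0 : Fin 2) = 1 := rfl
  have s01 : (0 : Fin 3).succAbove (1 : Fin 2) = 2 := rfl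
  have s10 : (1 : Fin 3).succAbove (0 : Fin 2) = 0 := rfl
  have s11 : (1 : Fin 3).succAbove (1 : Fin 2) = 2 := rfl
  have s20 : (2 : Fin 3).succAbove (0 : Fin 2) = 0 := rfl
  have s21 : (2 : Fin 3).succAbove (1 : Fin 2) = 1 := rfl
  ext a b
  simp only [Matrix.add_apply, Matrix.mul_apply, Fin.sum_univ_three, Matrix.transpose_apply,
    fund_aux, det_four_aux, s00, s01, s10, s11, s20, s21, Matrix.of_apply,
    Matrix.cons_val, Matrix.zero_apply, Fin.val_zero, Fin.val_one, Fin.val_two]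
  fin_cases a <;> fin_cases b <;> dsimp only [Fin.zero_eta, Fin.mk_one, Fin.reduceFinMk] <;> ring
end

section
/- Let P_i and P_j be real 3×4 matrices of rank 3. Then 𝓕(P_i, P_j) = 0 if and only if P_i and P_j have coincident centers, i.e., the kernel of x ↦ P_i x equals the kernel of x ↦ P_j x. -/
open Matrix

lemma det_four (a b c d : Fin 4 → ℝ) : (Matrix.of ![a, b, c, d]).det =
    a 0 * (b 1 * (c 2 * d 3 - c 3 * d 2) - b 2 * (c 1 * d 3 - c 3 * d 1)
      + b 3 * (c 1 * d 2 - c 2 * d 1))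
    - a 1 * (b 0 * (c 2 * d 3 - c 3 * d 2) - b 2 * (c 0 * d 3 - c 3 * d 0)
      + b 3 * (c 0 * d 2 - c 2 * d 0))
    + a 2 * (b 0 * (c 1 * d 3 - c 3 * d 1) - b 1 * (c 0 * d 3 - c 3 * d 0)
      + b 3 * (c 0 * d 1 - c 1 * d 0))
    - a 3 * (b 0 * (c 1 * d 2 - c 2 * d 1) - b 1 * (c 0 * d 2 - c 2 * d 0)
      + b 2 * (c 0 * d 1 - c 1 * d 0)) := by
  rw [Matrix.det_succ_row_zero]
  simp [Fin.sum_univ_four, Matrix.det_fin_three, Fin.succAbove]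
  ring

set_option maxHeartbeats 1000000 in
lemma five_rel (a b c q r : Fin 4 → ℝ) (i : Fin 4) :
    (Matrix.of ![a, b, c, q]).det * r i - (Matrix.of ![a, b, c, r]).det * q i
      + (Matrix.of ![a, b, q, r]).det * c i - (Matrix.of ![a, c, q, r]).det * b i
      + (Matrix.of ![b, c, q, r]).det * a i = 0 := by
  simp only [det_four]
  fin_cases i <;> simp only [Fin.zero_eta, Fin.mk_one, Fin.reduceFinMk] <;> ring

lemma fund_entry (P Q : Matrix (Fin 3) (Fin 4) ℝ) (h k : Fin 3) (hz : fund P Q = 0) :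
    (Matrix.of ![P (k.succAbove 0), P (k.succAbove 1), Q (h.succAbove 0),
      Q (h.succAbove 1)]).det = 0 := by
  have h1 := congrFun (congrFun hz h) k
  simp only [fund, Matrix.of_apply, Matrix.zero_apply, mul_eq_zero] at h1
  rcases h1 with h1 | h1
  · exact absurd h1 (pow_ne_zero _ (by norm_num))
  · rw [← h1]
    congr 1
    ext r c
    fin_cases r <;> rfl

lemma pair_rel (P Q : Matrix (Fin 3) (Fin 4) ℝ) (h : Fin 3) (hz : fund P Q = 0) (i : Fin 4) :
    (Matrix.of ![P 0, P 1, P 2, Q (h.succAbove 0)]).det * Q (h.succAbove 1) i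
      = (Matrix.of ![P 0, P 1, P 2, Q (h.succAbove 1)]).det * Q (h.succAbove 0) i := by
  have h0 := fund_entry P Q h 0 hz
  have h1 := fund_entry P Q h 1 hz
  have h2 := fund_entry P Q h 2 hz
  have e := five_rel (P 0) (P 1) (P 2) (Q (h.succAbove 0)) (Q (h.succAbove 1)) i
  change (Matrix.of ![P 1, P 2, Q (h.succAbove 0), Q (h.succAbove 1)]).det = 0 at h0
  change (Matrix.of ![P 0, P 2, Q (h.succAbove 0), Q (h.succAbove 1)]).det = 0 at h1
  change (Matrix.of ![P 0, P 1, Q (h.succAbove 0), Q (h.succAbove 1)]).det = 0 at h2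
  rw [h0, h1, h2] at e
  linarith

lemma rows_inj (Q : Matrix (Fin 3) (Fin 4) ℝ) (hQ : Q.rank = 3) (y : Fin 3 → ℝ)
    (hy : ∀ i, y 0 * Q 0 i + y 1 * Q 1 i + y 2 * Q 2 i = 0) : y = 0 := by
  have h1 : Qᵀ.rank = 3 := by rw [Matrix.rank_transpose, hQ]
  have h2 := LinearMap.finrank_range_add_finrank_ker Qᵀ.mulVecLin
  rw [Matrix.rank] at h1
  rw [h1] at h2
  rw [Module.finrank_fin_fun] at h2
  have this : y ∈ LinearMap.ker Qᵀ.mulVecLin := by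
    rw [LinearMap.mem_ker]
    ext i
    rw [Matrix.mulVecLin_apply]
    simp only [Matrix.mulVec, dotProduct, Fin.sum_univ_three, Matrix.transpose_apply,
      Pi.zero_apply]
    linarith [hy i]
  have hb : LinearMap.ker Qᵀ.mulVecLin = ⊥ := Submodule.finrank_eq_zero.mp (by omega)
  rw [hb] at this
  simpa using this

lemma finrank_ker_cam (Q : Matrix (Fin 3) (Fin 4) ℝ) (hQ : Q.rank = 3) :
    Module.finrank ℝ (LinearMap.ker Q.mulVecLin) = 1 := by
  have h2 := LinearMap.finrank_range_add_finrank_ker Q.mulVecLin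
  rw [Matrix.rank] at hQ
  rw [hQ, Module.finrank_fin_fun] at h2
  omega

lemma det_zero (P Q : Matrix (Fin 3) (Fin 4) ℝ) (hQ : Q.rank = 3) (hz : fund P Q = 0)
    (j : Fin 3) : (Matrix.of ![P 0, P 1, P 2, Q j]).det = 0 := by
  have r0 := pair_rel P Q 0 hz
  have r2 := pair_rel P Q 2 hz
  set D : Fin 3 → ℝ := fun j => (Matrix.of ![P 0, P 1, P 2, Q j]).det with hD
  change ∀ i, D 1 * Q 2 i = D 2 * Q 1 i at r0
  change ∀ i, D 0 * Q 1 i = D 1 * Q 0 i at r2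
  have a0 := rows_inj Q hQ ![0, -D 2, D 1] (fun i => by simp; linarith [r0 i])
  have a2 := rows_inj Q hQ ![-D 1, D 0, 0] (fun i => by simp; linarith [r2 i])
  have b1 := congrFun a0 1
  have b2 := congrFun a0 2
  have b3 := congrFun a2 1
  simp at b1 b2 b3
  change D j = 0
  fin_cases j <;> assumption

theorem fund_eq_zero_iff_coincident_centers (Pi Pj : Matrix (Fin 3) (Fin 4) ℝ)
    (hi : Pi.rank = 3) (hj : Pj.rank = 3) :
    fund Pi Pj = 0 ↔
      LinearMap.ker Pi.mulVecLin = LinearMap.ker Pj.mulVecLin := by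
  have fi := finrank_ker_cam Pi hi
  have fj := finrank_ker_cam Pj hj
  constructor
  · intro hz
    apply Submodule.eq_of_le_of_finrank_eq _ (fi.trans fj.symm)
    intro v hv
    rw [LinearMap.mem_ker]
    ext j
    obtain ⟨w, hw, hw0⟩ := Matrix.exists_mulVec_eq_zero_iff.mpr (det_zero Pi Pj hj hz j)
    have hwk : w ∈ LinearMap.ker Pi.mulVecLin := by
      rw [LinearMap.mem_ker]
      ext k
      fin_cases k
      · exact congrFun hw0 0
      · exact congrFun hw0 1
      · exact congrFun hw0 2
    have hq : Pj j ⬝ᵥ w = 0 := congrFun hw0 3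
    obtain ⟨c, hc⟩ := (finrank_eq_one_iff_of_nonzero' (⟨w, hwk⟩ : LinearMap.ker Pi.mulVecLin)
      (by simpa [Subtype.ext_iff] using hw)).mp fi ⟨v, hv⟩
    have hc' : c • w = v := congrArg Subtype.val hc
    change Pj j ⬝ᵥ v = 0
    rw [← hc', dotProduct_smul, hq, smul_zero]
  · intro he
    obtain ⟨⟨v, hv⟩, hv0, -⟩ := finrank_eq_one_iff'.mp fi
    have hv' := he ▸ hv
    rw [LinearMap.mem_ker] at hv hv'
    have hne : v ≠ 0 := fun h => hv0 (Subtype.ext h)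
    ext h k
    simp only [fund, Matrix.of_apply, Matrix.zero_apply, mul_eq_zero]
    right
    apply Matrix.exists_mulVec_eq_zero_iff.mp
    refine ⟨v, hne, ?_⟩
    ext r
    fin_cases r
    · exact congrFun hv (k.succAbove 0)
    · exact congrFun hv (k.succAbove 1)
    · exact congrFun hv' (h.succAbove 0)
    · exact congrFun hv' (h.succAbove 1)
end

section
/- For all real 3×4 matrices P_i and P_j, every real 4×4 matrix H, and all real scalars λ and μ, one has 𝓕(λ·P_i·H, μ·P_j·H) = λ²·μ²·det(H) · 𝓕(P_i, P_j). In particular, two camera pairs related by a common invertible 4×4 transformation and individual nonzero rescalings of the cameras (i.e., projectively equivalent pairs) have proportional fundamental matrices. -/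
open Matrix

/-- equivariance of the fundamental matrix under a common `4 × 4`
transformation `H` and individual rescalings of the cameras:
`𝓕(λ·Pᵢ·H, μ·Pⱼ·H) = λ²·μ²·det H · 𝓕(Pᵢ, Pⱼ)`. -/
theorem fund_proj_equivariant (Pi Pj : Matrix (Fin 3) (Fin 4) ℝ)
    (H : Matrix (Fin 4) (Fin 4) ℝ) (l m : ℝ) :
    fund (l • (Pi * H)) (m • (Pj * H)) = (l ^ 2 * m ^ 2 * H.det) • fund Pi Pj := by
  ext h k
  simp only [fund, Matrix.smul_apply, Matrix.of_apply, smul_eq_mul]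
  set A : Matrix (Fin 4) (Fin 4) ℝ := Matrix.of fun r c : Fin 4 =>
          if hr : (r : ℕ) < 2 then Pi (k.succAbove ⟨(r : ℕ), hr⟩) c
          else Pj (h.succAbove ⟨(r : ℕ) - 2, by have := r.isLt; omega⟩) c with hA
  have key : (Matrix.of fun r c : Fin 4 =>
          if hr : (r : ℕ) < 2 then l * (Pi * H) (k.succAbove ⟨(r : ℕ), hr⟩) c
          else m * (Pj * H) (h.succAbove ⟨(r : ℕ) - 2, by have := r.isLt; omega⟩) c)
      = Matrix.diagonal ![l, l, m, m] * (A * H) := by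
    ext r c
    rw [Matrix.diagonal_mul]
    fin_cases r <;> simp [hA, Matrix.mul_apply]
  rw [key, Matrix.det_mul, Matrix.det_mul, Matrix.det_diagonal]
  simp only [Fin.prod_univ_four, Matrix.cons_val]
  ring
end
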